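/- arXiv:2505.12270 — 4 statements merged into one kernel-verified Lean document; each statement's English description precedes it below -/
import Mathlib

section
/- Let t be a positive integer with 3 ∤ t. Then for every nonnegative integer n, b^2_{3,2t}(4n+3) ≡ 0 (mod 4). -/
/-- `coloredRegular k l m n` is the number of `k`-colored partitions of `n` into parts
divisible by neither `l` nor `m`, i.e. the coefficient of `q^n` in
`∏_{j ≥ 1, l ∤ j, m ∤ j} (1 - q^j)^{-k}`.  A `k`-colored partition is a multiset of
(part, color) pairs, where parts are positive integers not divisible by `l` or `m`
and colors range over `{0, …, k-1}`. -/
noncomputable def coloredRegular (k l m n : ℕ) : ℕ :=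
  Nat.card {M : Multiset (ℕ × ℕ) //
    (∀ x ∈ M, ¬ l ∣ x.1 ∧ ¬ m ∣ x.1 ∧ x.2 < k) ∧ (M.map Prod.fst).sum = n}

open Finset
/-- fiberwise product count -/
theorem aux_sum_fib {α β : Type*} [DecidableEq α] [DecidableEq β] (A : Finset α) (B : Finset β)
    (f : α → ℕ) (g : β → ℕ) (m : ℕ) (q : ℕ × ℕ → Prop) [DecidablePred q] :
    ∑ x ∈ (antidiagonal m).filter q, #(A.filter (fun a => f a = x.1)) * #(B.filter (fun b => g b = x.2))
      = #((A ×ˢ B).filter (fun z => f z.1 + g z.2 = m ∧ q (f z.1, g z.2))) := by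
  rw [card_eq_sum_card_fiberwise (f := fun z => (f z.1, g z.2)) (t := (antidiagonal m).filter q)]
  · refine sum_congr rfl fun x hx => ?_
    rw [← card_product]
    congr 1
    ext z
    simp only [mem_filter, mem_product, HasAntidiagonal.mem_antidiagonal] at hx ⊢
    constructor
    · rintro ⟨⟨h1, h2⟩, h3, h4⟩
      refine ⟨⟨⟨h1, h3⟩, by omega, ?_⟩, by rw [h2, h4]⟩
      rw [h2, h4]; exact hx.2
    · rintro ⟨⟨⟨h1, h3⟩, h5, h6⟩, h7⟩
      rw [← h7]; exact ⟨⟨h1, rfl⟩, h3, rfl⟩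
  · intro z hz
    simpa using (mem_filter.mp hz).2

/-- box -/
noncomputable def bx (B : ℕ) : Finset ℤ := Icc (-(B:ℤ)) B

open PowerSeries

theorem coeffE (B i : ℕ) (h : 2 * i ≤ B) : (pentagonalSeries (ZMod 2)).coeff i =
    (#((bx B).filter (fun k => pentagonal k = i)) : ZMod 2) := by
  by_cases hi : ∃ k, pentagonal k = i
  · obtain ⟨k, rfl⟩ := hi
    rw [coeff_pentagonalSeries_pentagonal]
    have : (bx B).filter (fun k' => pentagonal k' = pentagonal k) = {k} := by
      ext x
      simp only [pentagonal_inj, mem_filter, mem_singleton, bx, mem_Icc, and_iff_right_iff_imp]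
      rintro rfl
      have := two_mul_natCast_pentagonal x
      have h' : (2 * (pentagonal x) : ℤ) ≤ B := by exact_mod_cast h
      constructor <;> nlinarith
    rw [this]
    rcases Int.even_or_odd k with hk | hk
    · simp [Int.negOnePow_even k hk]
    · simp [Int.negOnePow_odd k hk]
  · rw [coeff_pentagonalSeries_eq_zero _ (by simpa using hi)]
    rw [filter_false_of_mem]; · simp
    intro x _ hx; exact hi ⟨x, hx⟩

theorem coeffE3 (B i : ℕ) (h : 2 * i ≤ B) : (expand 3 (by decide) (pentagonalSeries (ZMod 2))).coeff i =
    (#((bx B).filter (fun k => 3 * pentagonal k = i)) : ZMod 2) := by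
  rw [coeff_expand]
  split_ifs with h3
  · obtain ⟨j, rfl⟩ := h3
    rw [Nat.mul_div_cancel_left _ (by decide), coeffE B j (by omega)]
    simp
  · rw [filter_false_of_mem]; · simp
    intro x _ hx; exact h3 ⟨_, hx.symm⟩

noncomputable def PP : PowerSeries (ZMod 2) :=
  pentagonalSeries (ZMod 2) * expand 3 (by decide) (pentagonalSeries (ZMod 2))

theorem coeffPP (B N : ℕ) (h : 2 * N ≤ B) : PP.coeff N =
    (#((bx B ×ˢ bx B).filter (fun z => pentagonal z.1 + 3 * pentagonal z.2 = N)) : ZMod 2) := by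
  have := aux_sum_fib (bx B) (bx B) pentagonal (fun k => 3 * pentagonal k) N (fun _ => True)
  simp only [filter_true, and_true] at this
  rw [← this, PP, coeff_mul]
  push_cast
  refine sum_congr rfl fun x hx => ?_
  simp only [HasAntidiagonal.mem_antidiagonal] at hx
  rw [coeffE B _ (by omega), coeffE3 B _ (by omega)]

/-- reduced representation set -/
noncomputable def SS (B : ℕ) : Finset (ℤ × ℤ) :=
  (bx B ×ˢ bx B).filter (fun z => z.1 % 3 = 1 ∧ (z.2 = 0 ∨ z.2 % 3 = 2) ∧ (z.1 + z.2) % 2 = 1)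

def ff (z : ℤ × ℤ) : ℕ := ((z.1 ^ 2 + 3 * z.2 ^ 2) / 6).toNat

theorem ff_spec (z : ℤ × ℤ) (h1 : z.1 % 3 = 1) (h2 : (z.1 + z.2) % 2 = 1) :
    z.1 ^ 2 + 3 * z.2 ^ 2 = 6 * (ff z : ℤ) + 1 := by
  have h6 : (z.1 ^ 2 + 3 * z.2 ^ 2) % 6 = 1 := by
    obtain ⟨a, b⟩ := z
    simp only at *
    obtain ⟨c, rfl⟩ : ∃ c, a = 3 * c + 1 := ⟨a / 3, by omega⟩
    obtain ⟨d, hd⟩ : ∃ d, b = 2 * d - 3 * c := ⟨(b + 3 * c) / 2, by omega⟩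
    subst hd
    have : (3 * c + 1) ^ 2 + 3 * (2 * d - 3 * c) ^ 2
      = 6 * (6 * c ^ 2 + c + 2 * d ^ 2 - 6 * d * c) + 1 := by ring
    rw [this]
    omega
  have : 0 ≤ (z.1 ^ 2 + 3 * z.2 ^ 2) := by positivity
  unfold ff
  omega

noncomputable def TT (B N : ℕ) : Finset (ℤ × ℤ) :=
  (bx B ×ˢ bx B).filter (fun z => z.1 % 3 = 1 ∧ z.2 % 3 ≠ 1 ∧ z.1 ^ 2 + 3 * z.2 ^ 2 = 6 * (N : ℤ) + 1)

theorem opp_parity (u v : ℤ) (N : ℕ) (h : u ^ 2 + 3 * v ^ 2 = 6 * (N : ℤ) + 1) : (u + v) % 2 = 1 := by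
  rcases Int.emod_two_eq_zero_or_one (u + v) with h0 | h0
  · obtain ⟨d, hd⟩ : ∃ d, v = 2 * d - u := ⟨(u + v) / 2, by omega⟩
    subst hd
    have : u ^ 2 + 3 * (2 * d - u) ^ 2 = 2 * (2 * u ^ 2 + 6 * d ^ 2 - 6 * d * u) := by ring
    omega
  · exact h0

theorem card_KL (B N : ℕ) (h : 6 * N + 1 ≤ B) :
    #((bx B ×ˢ bx B).filter (fun z => pentagonal z.1 + 3 * pentagonal z.2 = N)) = #(TT B N) := by
  have h' : (6 * (N : ℤ) + 1) ≤ B := by exact_mod_cast h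
  refine card_bij'
    (fun z _ => if (z.1 - z.2) % 2 = 0 then ((2 - 3 * z.1 - 9 * z.2) / 2, 3 * ((z.2 - z.1) / 2))
      else ((-1 - 3 * z.1 + 9 * z.2) / 2, (1 - 3 * z.1 - 3 * z.2) / 2))
    (fun z _ => ((1 - z.1 - 3 * z.2) / 6,
      (1 - (if z.2 % 3 = 0 then z.1 - z.2 else z.2 - z.1)) / 6)) ?_ ?_ ?_ ?_
  · rintro ⟨k, l⟩ hz
    simp only [mem_filter, mem_product, bx, mem_Icc] at hz
    have hk := two_mul_natCast_pentagonal k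
    have hl := two_mul_natCast_pentagonal l
    have hN : (pentagonal k : ℤ) + 3 * pentagonal l = N := by exact_mod_cast hz.2
    have key : ∀ u v : ℤ, u % 3 = 1 → v % 3 ≠ 1 → u ^ 2 + 3 * v ^ 2 = 6 * (N : ℤ) + 1 →
        (u, v) ∈ TT B N := by
      intro u v h1 h2 h3
      simp only [TT, mem_filter, mem_product, bx, mem_Icc]
      refine ⟨⟨⟨?_, ?_⟩, ?_, ?_⟩, h1, h2, h3⟩ <;> nlinarith
    simp only
    split_ifs with hp
    · obtain ⟨d, rfl⟩ : ∃ d, l = k + 2 * d := ⟨(l - k) / 2, by omega⟩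
      have e1 : (2 - 3 * k - 9 * (k + 2 * d)) / 2 = 1 - 6 * k - 9 * d := by omega
      have e2 : (k + 2 * d - k) / 2 = d := by omega
      rw [e1, e2]
      apply key <;> first | omega | nlinarith
    · obtain ⟨d, rfl⟩ : ∃ d, l = k + 2 * d + 1 := ⟨(l - k) / 2, by omega⟩
      have e1 : (-1 - 3 * k + 9 * (k + 2 * d + 1)) / 2 = 4 + 3 * k + 9 * d := by omega
      have e2 : (1 - 3 * k - 3 * (k + 2 * d + 1)) / 2 = - 1 - 3 * k - 3 * d := by omega
      rw [e1, e2]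
      apply key <;> first | omega | nlinarith
  · rintro ⟨u, v⟩ hz
    simp only [TT, mem_filter, mem_product, bx, mem_Icc] at hz
    obtain ⟨-, h1, h2, h3⟩ := hz
    have hp := opp_parity u v N h3
    have key : ∀ k l : ℤ, k * (3 * k - 1) + 3 * (l * (3 * l - 1)) = 2 * N →
        (k, l) ∈ (bx B ×ˢ bx B).filter (fun z => pentagonal z.1 + 3 * pentagonal z.2 = N) := by
      intro k l hh
      have hk := two_mul_natCast_pentagonal k
      have hl := two_mul_natCast_pentagonal l
      simp only [mem_filter, mem_product, bx, mem_Icc]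
      refine ⟨⟨⟨?_, ?_⟩, ?_, ?_⟩, by omega⟩ <;> nlinarith
    simp only
    obtain ⟨k, hk⟩ : ∃ k, u = 1 - 6 * k - 3 * v := ⟨(1 - u - 3 * v) / 6, by omega⟩
    subst hk
    have e1 : (1 - (1 - 6 * k - 3 * v) - 3 * v) / 6 = k := by omega
    rw [e1]
    split_ifs with hv
    · obtain ⟨d, rfl⟩ : ∃ d, v = 3 * d := ⟨v / 3, by omega⟩
      have e2 : (1 - (1 - 6 * k - 3 * (3 * d) - 3 * d)) / 6 = k + 2 * d := by omega
      rw [e2]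
      apply key; nlinarith
    · obtain ⟨d, rfl⟩ : ∃ d, v = 3 * d + 2 := ⟨v / 3, by omega⟩
      have e2 : (1 - (3 * d + 2 - (1 - 6 * k - 3 * (3 * d + 2)))) / 6 = - 1 - k - 2 * d := by omega
      rw [e2]
      apply key; nlinarith
  · rintro ⟨k, l⟩ hz
    simp only
    split_ifs <;> simp only [Prod.mk.injEq] at * <;> omega
  · rintro ⟨u, v⟩ hz
    simp only [TT, mem_filter, mem_product, bx, mem_Icc] at hz
    obtain ⟨-, h1, h2, h3⟩ := hz
    have hp := opp_parity u v N h3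
    simp only
    split_ifs <;> simp only [Prod.mk.injEq] <;> omega

theorem card_TT (B N : ℕ) :
    (#(TT B N) : ZMod 2) = #((SS B).filter (fun z => ff z = N)) := by
  have h0 : (SS B).filter (fun z => ff z = N) = (TT B N).filter (fun z => ¬ (z.2 % 3 = 0 ∧ z.2 ≠ 0)) := by
    ext ⟨u, v⟩
    simp only [SS, TT, mem_filter]
    constructor
    · rintro ⟨⟨h1, h2, h3, h4⟩, h5⟩
      have := ff_spec (u, v) h2 h4
      rw [h5] at this
      refine ⟨⟨h1, h2, ?_, this⟩, ?_⟩ <;> simp only at * <;> omega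
    · rintro ⟨⟨h1, h2, h3, h4⟩, h5⟩
      have h6 := opp_parity u v N h4
      have := ff_spec (u, v) h2 h6
      refine ⟨⟨h1, h2, ?_, h6⟩, ?_⟩ <;> simp only at * <;> omega
  rw [h0, ← card_filter_add_card_filter_not (s := TT B N) (fun z => z.2 % 3 = 0 ∧ z.2 ≠ 0)]
  push_cast
  rw [add_eq_right, card_eq_sum_ones]
  push_cast
  refine sum_involution (fun z _ => (z.1, -z.2)) ?_ ?_ ?_ ?_
  · intros; decide
  · rintro ⟨u, v⟩ hz _
    simp only [mem_filter] at hz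
    simp only [ne_eq, Prod.mk.injEq]; omega
  · rintro ⟨u, v⟩ hz
    simp only [mem_filter, TT, mem_product, bx, mem_Icc] at hz ⊢
    obtain ⟨⟨h1, h2, h3, h4⟩, h5⟩ := hz
    refine ⟨⟨?_, h2, by omega, by rw [neg_sq]; exact h4⟩, by omega⟩
    omega
  · rintro ⟨u, v⟩ hz
    simp

theorem coeffPP2 (B N : ℕ) (h : 6 * N + 1 ≤ B) :
    PP.coeff N = (#((SS B).filter (fun z => ff z = N)) : ZMod 2) := by
  rw [coeffPP B N (by omega), card_KL B N h, card_TT]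

theorem hset_lem (n B : ℕ) : (SS B ×ˢ SS B).filter (fun z => ff z.1 + ff z.2 = 4 * n + 3 ∧ ff z.1 % 2 = 0)
    = ((bx B ×ˢ bx B) ×ˢ (bx B ×ˢ bx B)).filter (fun z => z.1.1 % 6 = 1 ∧ (z.1.2 = 0 ∨ z.1.2 % 3 = 2)
        ∧ z.1.2 % 2 = 0 ∧ z.2.1 % 6 = 4 ∧ z.2.2 % 6 = 5 ∧ (z.2.1 - z.1.2) % 4 = 0 ∧
        z.1.1 ^ 2 + 3 * z.1.2 ^ 2 + z.2.1 ^ 2 + 3 * z.2.2 ^ 2 = 24 * (n : ℤ) + 20) := by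
  have sq2 : ∀ w : ℤ, w % 2 = 1 → ∃ d, w ^ 2 = 8 * d + 1 := by
    intro w hw
    obtain ⟨e, rfl⟩ : ∃ e, w = 2 * e + 1 := ⟨w / 2, by omega⟩
    obtain ⟨d, hd⟩ := Int.even_mul_succ_self e
    exact ⟨d, by nlinarith⟩
  have sq0 : ∀ w : ℤ, w % 2 = 0 → ∃ d, w = 2 * d ∧ w ^ 2 = 4 * d ^ 2 := by
    intro w hw
    exact ⟨w / 2, by omega, by rw [show (4 : ℤ) * (w / 2) ^ 2 = (2 * (w / 2)) ^ 2 by ring]; congr 1; omega⟩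
  ext ⟨⟨u, v⟩, u', v'⟩
  simp only [mem_filter, SS, mem_product]
  constructor
  · rintro ⟨⟨⟨m1, a1, a2, a3⟩, m2, b1, b2, b3⟩, c1, c2⟩
    have f1 := ff_spec (u, v) a1 a3
    have f2 := ff_spec (u', v') b1 b3
    simp only at f1 f2
    have hu : u % 2 = 1 := by
      by_contra hu
      obtain ⟨d, -, hd⟩ := sq0 u (by omega)
      obtain ⟨e, he⟩ := sq2 v (by omega)
      omega
    have hu' : u' % 2 = 0 := by
      by_contra hu
      obtain ⟨d, hd⟩ := sq2 u' (by omega)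
      obtain ⟨e, -, he⟩ := sq0 v' (by omega)
      omega
    refine ⟨⟨m1, m2⟩, by omega, a2, by omega, by omega, by omega, ?_, by omega⟩
    obtain ⟨p, hp⟩ := sq2 u hu
    obtain ⟨q, hq⟩ := sq2 v' (by omega)
    obtain ⟨r, hr, hr2⟩ := sq0 u' hu'
    obtain ⟨s, hs, hs2⟩ := sq0 v (by omega)
    by_contra hrs
    rcases Int.emod_two_eq_zero_or_one r with h | h
    · obtain ⟨r', -, hr'⟩ := sq0 r h
      obtain ⟨s', hs'⟩ := sq2 s (by omega)
      omega
    · obtain ⟨r', hr'⟩ := sq2 r h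
      obtain ⟨s', -, hs'⟩ := sq0 s (by omega)
      omega
  · rintro ⟨⟨m1, m2⟩, a1, a2, a3, b1, b2, ab, e⟩
    have f1 := ff_spec (u, v) (by simp only; omega) (by simp only; omega)
    have f2 := ff_spec (u', v') (by simp only; omega) (by simp only; omega)
    simp only at f1 f2
    obtain ⟨p, hp⟩ := sq2 u (by omega)
    obtain ⟨s, hs, hs2⟩ := sq0 v (by omega)
    refine ⟨⟨⟨m1, by omega, a2, by omega⟩, m2, by omega, by omega, by omega⟩, by omega, by omega⟩



theorem inv_lem (u v u' v' : ℤ) (h2 : v = 0 ∨ v % 3 = 2) (h3 : v % 2 = 0) (h4 : u' % 6 = 4)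
    (h6 : (u' - v) % 4 = 0) (F : (ℤ × ℤ) × ℤ × ℤ → (ℤ × ℤ) × ℤ × ℤ)
    (hF : F = fun z => if z.1.2 = 0 then ((z.1.1, z.2.1 / 2), (- (z.2.1 / 2), z.2.2))
    else if z.1.2 = - z.2.1 then ((z.1.1, 0), (2 * z.1.2, z.2.2))
    else ((z.1.1, (z.1.2 - z.2.1) / 2), (- ((z.2.1 + 3 * z.1.2) / 2), z.2.2))) :
    F (F ((u, v), (u', v'))) = ((u, v), (u', v')) := by
  by_cases c1 : v = 0
  · have : F ((u, v), (u', v')) = ((u, u' / 2), (- (u' / 2), v')) := by simp [hF, c1]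
    rw [this]
    have e : u' / 2 ≠ 0 := by omega
    simp only [hF, e, if_false, neg_neg, if_true, Prod.mk.injEq, true_and, and_true]
    omega
  by_cases c2 : v = - u'
  · have : F ((u, v), (u', v')) = ((u, 0), (2 * v, v')) := by simp only [hF, c1, if_false]; rw [if_pos c2]
    rw [this]
    simp only [hF, if_true, Prod.mk.injEq, true_and, and_true]
    omega
  · have : F ((u, v), (u', v')) = ((u, (v - u') / 2), (- ((u' + 3 * v) / 2), v')) := by
      simp only [hF, c1, c2, if_false]
    rw [this]
    have e1 : (v - u') / 2 ≠ 0 := by omega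
    have e2 : (v - u') / 2 ≠ - - ((u' + 3 * v) / 2) := by omega
    simp only [hF, e1, e2, if_false, Prod.mk.injEq, true_and, and_true]
    omega

theorem PP_even_odd (n : ℕ) :
    ∑ x ∈ (antidiagonal (4 * n + 3)).filter (fun x => x.1 % 2 = 0), PP.coeff x.1 * PP.coeff x.2 = 0 := by
  obtain ⟨B, hB⟩ : ∃ B, B = 6 * (4 * n + 3) + 1 := ⟨_, rfl⟩
  have := aux_sum_fib (SS B) (SS B) ff ff (4 * n + 3) (fun x => x.1 % 2 = 0)
  have h2 : ∑ x ∈ (antidiagonal (4 * n + 3)).filter (fun x => x.1 % 2 = 0), PP.coeff x.1 * PP.coeff x.2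
     = ((∑ x ∈ (antidiagonal (4 * n + 3)).filter (fun x => x.1 % 2 = 0), #((SS B).filter (fun a => ff a = x.1)) * #((SS B).filter (fun b => ff b = x.2)) : ℕ) : ZMod 2) := by
    push_cast
    refine sum_congr rfl fun x hx => ?_
    simp only [mem_filter, HasAntidiagonal.mem_antidiagonal] at hx
    rw [coeffPP2 B _ (by omega), coeffPP2 B _ (by omega)]
  rw [h2, this]
  rw [hset_lem, card_eq_sum_ones]
  push_cast
  refine sum_involution (fun z _ =>
    if z.1.2 = 0 then ((z.1.1, z.2.1 / 2), (- (z.2.1 / 2), z.2.2))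
    else if z.1.2 = - z.2.1 then ((z.1.1, 0), (2 * z.1.2, z.2.2))
    else ((z.1.1, (z.1.2 - z.2.1) / 2), (- ((z.2.1 + 3 * z.1.2) / 2), z.2.2))) ?_ ?_ ?_ ?_
  · intros; decide
  · rintro ⟨⟨u, v⟩, u', v'⟩ hz _
    simp only [mem_filter] at hz
    simp only
    split_ifs <;> simp only [ne_eq, Prod.mk.injEq] <;> omega
  · rintro ⟨⟨u, v⟩, u', v'⟩ hz
    simp only [mem_filter] at hz
    obtain ⟨-, h1, h2, h3, h4, h5, h6, h7⟩ := hz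
    have key : ∀ V U : ℤ, (V = 0 ∨ V % 3 = 2) → V % 2 = 0 → U % 6 = 4 → (U - V) % 4 = 0 →
       U ^ 2 + 3 * V ^ 2 = u' ^ 2 + 3 * v ^ 2 → ((u, V), (U, v')) ∈
       ((bx B ×ˢ bx B) ×ˢ (bx B ×ˢ bx B)).filter (fun z => z.1.1 % 6 = 1 ∧ (z.1.2 = 0 ∨ z.1.2 % 3 = 2)
        ∧ z.1.2 % 2 = 0 ∧ z.2.1 % 6 = 4 ∧ z.2.2 % 6 = 5 ∧ (z.2.1 - z.1.2) % 4 = 0 ∧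
        z.1.1 ^ 2 + 3 * z.1.2 ^ 2 + z.2.1 ^ 2 + 3 * z.2.2 ^ 2 = 24 * (n : ℤ) + 20) := by
      intro V U k1 k2 k3 k4 k5
      have hB' : (B : ℤ) = 24 * n + 19 := by subst hB; push_cast; ring
      have a : ∀ w : ℤ, w ^ 2 ≤ 24 * n + 20 → -(B:ℤ) ≤ w ∧ w ≤ B := by
        intro w hw; constructor <;> nlinarith
      simp only [mem_filter, mem_product, bx, mem_Icc]
      refine ⟨⟨⟨a _ ?_, a _ ?_⟩, a _ ?_, a _ ?_⟩, h1, k1, k2, k3, h5, k4, ?_⟩ <;> nlinarith [sq_nonneg u, sq_nonneg v', sq_nonneg U, sq_nonneg V]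
    simp only
    split_ifs with c1 c2
    · obtain ⟨d, rfl⟩ : ∃ d, u' = 2 * d := ⟨u' / 2, by omega⟩
      have : 2 * d / 2 = d := by omega
      rw [this]
      subst c1
      apply key <;> first | omega | ring
    · apply key <;> first | omega | (subst c2; ring)
    · obtain ⟨d, rfl⟩ : ∃ d, v = u' + 4 * d := ⟨(v - u') / 4, by omega⟩
      have e1 : (u' + 4 * d - u') / 2 = 2 * d := by omega
      have e2 : (u' + 3 * (u' + 4 * d)) / 2 = 2 * u' + 6 * d := by omega
      rw [e1, e2]
      apply key <;> first | omega | ring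
  · rintro ⟨⟨u, v⟩, u', v'⟩ hz
    simp only [mem_filter] at hz
    obtain ⟨-, h1, h2, h3, h4, h5, h6, -⟩ := hz
    exact inv_lem u v u' v' h2 h3 h4 h6 _ rfl
open scoped PowerSeries.WithPiTopology

theorem sq_expand (f : PowerSeries (ZMod 2)) : f ^ 2 = expand 2 (by decide) f := by
  have := MvPowerSeries.map_frobenius_expand (R := ZMod 2) (σ := Unit) 2 (by decide) (f := f)
  rw [ZMod.frobenius_zmod] at this
  rw [MvPowerSeries.map_id] at this
  exact this.symm

theorem hasProd_expand (k : ℕ) (hk : k ≠ 0) [TopologicalSpace (ZMod 2)] [DiscreteTopology (ZMod 2)] :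
    HasProd (fun i : ℕ => if k ∣ i + 1 then (1 - X ^ (i + 1) : PowerSeries (ZMod 2)) else 1)
      (expand k hk (pentagonalSeries (ZMod 2))) := by
  have hc : Continuous (expand k hk : PowerSeries (ZMod 2) →ₐ[ZMod 2] _) := by
    rw [continuous_iff_continuousAt]
    intro f
    rw [ContinuousAt, WithPiTopology.tendsto_iff_coeff_tendsto]
    intro d
    simp only [coeff_expand]
    split_ifs with h
    · exact (WithPiTopology.continuous_coeff (ZMod 2) (d / k)).continuousAt
    · exact tendsto_const_nhds
  have h := (WithPiTopology.hasProd_one_sub_X_pow (ZMod 2)).map (expand k hk) hc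
  have hinj : Function.Injective (fun i : ℕ => k * (i + 1) - 1) := by
    intro a b hab
    have h1 : 0 < k * (a + 1) := by positivity
    have h2 : 0 < k * (b + 1) := by positivity
    have : k * (a + 1) = k * (b + 1) := by simp only at hab; omega
    have := Nat.eq_of_mul_eq_mul_left (Nat.pos_of_ne_zero hk) this
    omega
  rw [← hinj.hasProd_iff]
  · convert h using 1
    ext1 i
    have h1 : 0 < k * (i + 1) := by positivity
    have : k * (i + 1) - 1 + 1 = k * (i + 1) := by omega
    simp [this, pow_mul]
  · intro x hx
    rw [if_neg]
    rintro ⟨c, hc⟩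
    apply hx
    rcases c with _ | c
    · omega
    · exact ⟨c, by simp only; omega⟩

noncomputable def HH (t : ℕ) : PowerSeries (ZMod 2) :=
  PowerSeries.mk fun n => (#(Nat.Partition.restricted n (fun j => ¬ 3 ∣ j ∧ ¬ 2 * t ∣ j)) : ZMod 2)

theorem HH_eq (t : ℕ) (ht : 0 < t) (h3 : ¬ 3 ∣ t) :
    HH t * (pentagonalSeries (ZMod 2) * expand (6 * t) (by omega) (pentagonalSeries (ZMod 2)))
     = expand 3 (by omega) (pentagonalSeries (ZMod 2)) * expand (2 * t) (by omega) (pentagonalSeries (ZMod 2)) := by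
  let : TopologicalSpace (ZMod 2) := ⊥
  have : DiscreteTopology (ZMod 2) := ⟨rfl⟩
  have hH := Nat.Partition.hasProd_powerSeriesMk_card_restricted (ZMod 2) (fun j => ¬ 3 ∣ j ∧ ¬ 2 * t ∣ j)
  have h1 := WithPiTopology.hasProd_one_sub_X_pow (ZMod 2)
  have h6 := hasProd_expand (6 * t) (by omega)
  have hh3 := hasProd_expand 3 (by omega)
  have h2 := hasProd_expand (2 * t) (by omega)
  have L := hH.mul (h1.mul h6)
  have R := hh3.mul h2
  refine L.unique (Eq.subst (motive := fun f => HasProd f _) (funext fun i => ?_) R)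
  symm
  have hcop : Nat.Coprime 3 (2 * t) := by
    rw [Nat.Prime.coprime_iff_not_dvd Nat.prime_three]
    omega
  have e6 : 6 * t ∣ i + 1 ↔ 3 ∣ i + 1 ∧ 2 * t ∣ i + 1 := by
    rw [show 6 * t = 3 * (2 * t) by ring]
    exact ⟨fun h => ⟨dvd_of_mul_right_dvd h, dvd_of_mul_left_dvd h⟩, fun h => hcop.mul_dvd_of_dvd_of_dvd h.1 h.2⟩
  simp only [e6]
  by_cases a : 3 ∣ i + 1 <;> by_cases b : 2 * t ∣ i + 1 <;> simp only [a, b, if_true, if_false, not_true, not_false_eq_true, and_true, true_and, and_false, false_and, mul_one, one_mul, and_self]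
  simp_rw [pow_mul]
  exact WithPiTopology.tsum_pow_mul_one_sub_of_constantCoeff_eq_zero (by simp)

theorem HH_fac (t : ℕ) (ht : 0 < t) (h3 : ¬ 3 ∣ t) :
    ∃ w : PowerSeries (ZMod 2), HH t = PP * expand 2 (by decide) w := by
  have h := HH_eq t ht h3
  obtain ⟨E, hE⟩ : ∃ E, E = pentagonalSeries (ZMod 2) := ⟨_, rfl⟩
  have hc : constantCoeff E = 1 := by
    rw [← coeff_zero_eq_constantCoeff_apply, hE]
    have := coeff_pentagonalSeries_pentagonal (ZMod 2) 0
    simpa [pentagonal_def] using this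
  rw [PP]
  rw [← hE] at h ⊢
  have e6 : expand (6 * t) (by omega) E = expand 2 (by decide) (expand (3 * t) (by omega) E) := by
    rw [← expand_mul]; congr 2; ring
  have e2 : expand (2 * t) (by omega) E = expand 2 (by decide) (expand t (by omega) E) := by
    rw [← expand_mul]
  rw [e6, e2] at h
  have hU : constantCoeff (E * expand (3 * t) (by omega) E) ≠ 0 := by
    simp [hc]
  refine ⟨expand t (by omega) E * (E * expand (3 * t) (by omega) E)⁻¹, ?_⟩
  have hinv : expand 2 (by decide) (E * expand (3 * t) (by omega) E)
      * expand 2 (by decide) (E * expand (3 * t) (by omega) E)⁻¹ = 1 := by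
    rw [← map_mul, PowerSeries.mul_inv_cancel _ hU, map_one]
  have hsq := sq_expand E
  rw [map_mul] at hinv ⊢
  rw [← hsq] at hinv
  linear_combination (-HH t) * hinv + E * (expand 2 (by decide) (E * expand (3 * t) (by omega) E)⁻¹) * h

/-- even part -/
noncomputable def evp (f : PowerSeries (ZMod 2)) : PowerSeries (ZMod 2) :=
  PowerSeries.mk fun n => if n % 2 = 0 then f.coeff n else 0
/-- odd part -/
noncomputable def odp (f : PowerSeries (ZMod 2)) : PowerSeries (ZMod 2) :=
  PowerSeries.mk fun n => if n % 2 = 1 then f.coeff n else 0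

theorem evp_mul (f w : PowerSeries (ZMod 2)) :
    evp (f * expand 2 (by decide) w) = evp f * expand 2 (by decide) w := by
  ext n
  rw [evp, coeff_mk, coeff_mul, coeff_mul]
  by_cases hn : n % 2 = 0
  · rw [if_pos hn]
    refine sum_congr rfl fun x hx => ?_
    rw [HasAntidiagonal.mem_antidiagonal] at hx
    rw [coeff_expand, evp, coeff_mk]
    split_ifs <;> first | rfl | omega | simp
  · rw [if_neg hn]
    symm
    refine sum_eq_zero fun x hx => ?_
    rw [HasAntidiagonal.mem_antidiagonal] at hx
    rw [coeff_expand, evp, coeff_mk]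
    split_ifs <;> first | rfl | omega | simp

theorem odp_mul (f w : PowerSeries (ZMod 2)) :
    odp (f * expand 2 (by decide) w) = odp f * expand 2 (by decide) w := by
  ext n
  rw [odp, coeff_mk, coeff_mul, coeff_mul]
  by_cases hn : n % 2 = 1
  · rw [if_pos hn]
    refine sum_congr rfl fun x hx => ?_
    rw [HasAntidiagonal.mem_antidiagonal] at hx
    rw [coeff_expand, odp, coeff_mk]
    split_ifs <;> first | rfl | omega | simp
  · rw [if_neg hn]
    symm
    refine sum_eq_zero fun x hx => ?_
    rw [HasAntidiagonal.mem_antidiagonal] at hx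
    rw [coeff_expand, odp, coeff_mk]
    split_ifs <;> first | rfl | omega | simp

theorem coeff_ev_od (f : PowerSeries (ZMod 2)) (n : ℕ) :
    (evp f * odp f).coeff (4 * n + 3) =
    ∑ x ∈ (antidiagonal (4 * n + 3)).filter (fun x => x.1 % 2 = 0), f.coeff x.1 * f.coeff x.2 := by
  rw [coeff_mul, sum_filter]
  refine sum_congr rfl fun x hx => ?_
  rw [HasAntidiagonal.mem_antidiagonal] at hx
  simp only [evp, odp, coeff_mk]
  split_ifs with h1 h2 <;> first | rfl | omega | simp

theorem HH_even_odd (t : ℕ) (ht : 0 < t) (h3 : ¬ 3 ∣ t) (n : ℕ) :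
    ∑ x ∈ (antidiagonal (4 * n + 3)).filter (fun x => x.1 % 2 = 0),
      (HH t).coeff x.1 * (HH t).coeff x.2 = 0 := by
  obtain ⟨w, hw⟩ := HH_fac t ht h3
  rw [← coeff_ev_od, hw, evp_mul, odp_mul]
  have : evp PP * expand 2 (by decide) w * (odp PP * expand 2 (by decide) w)
      = (evp PP * odp PP) * expand 4 (by decide) w := by
    have h4 : expand 4 (by decide) w = (expand 2 (by decide) w) ^ 2 := by
      rw [sq_expand, ← expand_mul]
    rw [h4]; ring
  rw [this, coeff_mul]
  refine sum_eq_zero fun x hx => ?_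
  rw [HasAntidiagonal.mem_antidiagonal] at hx
  rw [coeff_expand]
  split_ifs with h
  · obtain ⟨m, hm⟩ : ∃ m, x.1 = 4 * m + 3 := ⟨x.1 / 4, by omega⟩
    rw [hm, coeff_ev_od, PP_even_odd, zero_mul]
  · simp

theorem conv_mod4 (h : ℕ → ℕ) (n : ℕ)
    (hh : ∑ x ∈ (antidiagonal (4 * n + 3)).filter (fun x => x.1 % 2 = 0),
      (h x.1 : ZMod 2) * (h x.2 : ZMod 2) = 0) :
    ∑ x ∈ antidiagonal (4 * n + 3), h x.1 * h x.2 ≡ 0 [MOD 4] := by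
  rw [← sum_filter_add_sum_filter_not _ (fun x : ℕ × ℕ => x.1 % 2 = 0)]
  have : ∑ x ∈ (antidiagonal (4 * n + 3)).filter (fun x => ¬ x.1 % 2 = 0), h x.1 * h x.2
      = ∑ x ∈ (antidiagonal (4 * n + 3)).filter (fun x => x.1 % 2 = 0), h x.1 * h x.2 := by
    refine sum_bij' (fun x _ => x.swap) (fun x _ => x.swap) ?_ ?_ ?_ ?_ ?_
    · intro x hx
      simp only [mem_filter, HasAntidiagonal.mem_antidiagonal, Prod.fst_swap, Prod.snd_swap] at hx ⊢
      omega
    · intro x hx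
      simp only [mem_filter, HasAntidiagonal.mem_antidiagonal, Prod.fst_swap, Prod.snd_swap] at hx ⊢
      omega
    · simp
    · simp
    · intro x _
      simp [mul_comm]
  rw [this]
  have h2 : 2 ∣ ∑ x ∈ (antidiagonal (4 * n + 3)).filter (fun x => x.1 % 2 = 0), h x.1 * h x.2 := by
    rw [← ZMod.natCast_eq_zero_iff]
    push_cast
    exact hh
  rw [Nat.modEq_zero_iff_dvd]
  omega

/-- restricted multisets of given sum -/
noncomputable def RR (t i : ℕ) : Finset (Multiset ℕ) :=
  (Nat.Partition.restricted i (fun j => ¬ 3 ∣ j ∧ ¬ 2 * t ∣ j)).image Nat.Partition.parts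

theorem mem_RR (t i : ℕ) (m : Multiset ℕ) :
    m ∈ RR t i ↔ (∀ x ∈ m, ¬ 3 ∣ x ∧ ¬ 2 * t ∣ x) ∧ m.sum = i := by
  simp only [RR, mem_image, Nat.Partition.restricted, mem_filter, mem_univ, true_and]
  constructor
  · rintro ⟨p, hp, rfl⟩
    exact ⟨hp, p.parts_sum⟩
  · rintro ⟨h1, h2⟩
    refine ⟨⟨m, ?_, h2⟩, h1, rfl⟩
    intro x hx
    rcases Nat.eq_zero_or_pos x with rfl | h
    · exact absurd (dvd_zero 3) (h1 0 hx).1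
    · exact h

theorem card_RR (t i : ℕ) :
    #(RR t i) = #(Nat.Partition.restricted i (fun j => ¬ 3 ∣ j ∧ ¬ 2 * t ∣ j)) :=
  card_image_of_injective _ fun _ _ h => Nat.Partition.ext h

/-- splitting a two-colored multiset by color -/
def splitEquiv : {M : Multiset (ℕ × ℕ) // ∀ x ∈ M, x.2 < 2} ≃ Multiset ℕ × Multiset ℕ where
  toFun M := ((M.1.filter (fun x => x.2 = 0)).map Prod.fst, (M.1.filter (fun x => ¬ x.2 = 0)).map Prod.fst)
  invFun q := ⟨q.1.map (fun a => (a, 0)) + q.2.map (fun a => (a, 1)), by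
    intro x hx
    simp only [Multiset.mem_add, Multiset.mem_map] at hx
    rcases hx with ⟨a, -, rfl⟩ | ⟨a, -, rfl⟩ <;> simp⟩
  left_inv M := by
    obtain ⟨M, hM⟩ := M
    apply Subtype.ext
    simp only [Multiset.map_map]
    conv_rhs => rw [← Multiset.filter_add_not (fun x : ℕ × ℕ => x.2 = 0) M]
    congr 1
    · conv_rhs => rw [← Multiset.map_id (Multiset.filter _ M)]
      refine Multiset.map_congr rfl fun x hx => ?_
      rw [Multiset.mem_filter] at hx
      exact Prod.ext rfl hx.2.symm
    · conv_rhs => rw [← Multiset.map_id (Multiset.filter _ M)]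
      refine Multiset.map_congr rfl fun x hx => ?_
      rw [Multiset.mem_filter] at hx
      have := hM x hx.1
      exact Prod.ext rfl (by simp only [Function.comp, id]; omega)
  right_inv q := by
    obtain ⟨a, b⟩ := q
    simp [Multiset.filter_map, Multiset.map_map, Function.comp_def]

theorem colored_eq (t N : ℕ) : coloredRegular 2 3 (2 * t) N =
    ∑ x ∈ antidiagonal N, #(RR t x.1) * #(RR t x.2) := by
  have hs : ∑ x ∈ antidiagonal N, #(RR t x.1) * #(RR t x.2)
      = #((antidiagonal N).biUnion fun x => RR t x.1 ×ˢ RR t x.2) := by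
    rw [card_biUnion]
    · simp
    · intro x _ y _ hxy
      rw [Function.onFun, disjoint_left]
      rintro ⟨a, b⟩ h1 h2
      simp only [mem_product, mem_RR] at h1 h2
      exact hxy (Prod.ext (h1.1.2.symm.trans h2.1.2) (h1.2.2.symm.trans h2.2.2))
  rw [hs, coloredRegular, ← Nat.card_eq_finsetCard]
  refine Nat.card_congr ⟨fun M => ⟨splitEquiv ⟨M.1, fun x hx => (M.2.1 x hx).2.2⟩, ?_⟩,
    fun q => ⟨(splitEquiv.symm q.1).1, ?_⟩, ?_, ?_⟩
  · obtain ⟨M, h1, h2⟩ := M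
    simp only [splitEquiv, Equiv.coe_fn_mk, mem_biUnion, mem_product, mem_RR]
    refine ⟨(((M.filter (fun x => x.2 = 0)).map Prod.fst).sum,
      ((M.filter (fun x => ¬ x.2 = 0)).map Prod.fst).sum), ?_, ⟨?_, rfl⟩, ?_, rfl⟩
    · rw [HasAntidiagonal.mem_antidiagonal, ← Multiset.sum_add, ← Multiset.map_add,
        Multiset.filter_add_not, h2]
    · intro x hx
      simp only [Multiset.mem_map, Multiset.mem_filter] at hx
      obtain ⟨y, ⟨hy, -⟩, rfl⟩ := hx
      exact ⟨(h1 y hy).1, (h1 y hy).2.1⟩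
    · intro x hx
      simp only [Multiset.mem_map, Multiset.mem_filter] at hx
      obtain ⟨y, ⟨hy, -⟩, rfl⟩ := hx
      exact ⟨(h1 y hy).1, (h1 y hy).2.1⟩
  · obtain ⟨⟨a, b⟩, hq⟩ := q
    simp only [mem_biUnion, mem_product, mem_RR, HasAntidiagonal.mem_antidiagonal] at hq
    obtain ⟨x, hx, ⟨a1, a2⟩, b1, b2⟩ := hq
    constructor
    · intro y hy
      refine and_assoc.mp ⟨?_, (splitEquiv.symm (a, b)).2 y hy⟩
      simp only [splitEquiv, Equiv.coe_fn_symm_mk, Multiset.mem_add, Multiset.mem_map] at hy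
      rcases hy with ⟨c, hc, rfl⟩ | ⟨c, hc, rfl⟩
      · exact a1 c hc
      · exact b1 c hc
    · simp [splitEquiv, Multiset.map_map, Function.comp_def, a2, b2, hx]
  · intro M
    simp
  · intro q
    simp

theorem stmt_0 (t : ℕ) (ht : 0 < t) (h3 : ¬ 3 ∣ t) (n : ℕ) :
    coloredRegular 2 3 (2 * t) (4 * n + 3) ≡ 0 [MOD 4] := by
  rw [colored_eq]
  simp_rw [card_RR]
  apply conv_mod4 (fun i => #(Nat.Partition.restricted i (fun j => ¬ 3 ∣ j ∧ ¬ 2 * t ∣ j)))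
  have := HH_even_odd t ht h3 n
  simpa only [HH, coeff_mk] using this
end

section
/- For every nonnegative integer n, b^2_{3,4}(4n+1) ≡ 2 (mod 4) if n is a triangular number (i.e. n = m(m+1)/2 for some nonnegative integer m), and b^2_{3,4}(4n+1) ≡ 0 (mod 4) otherwise. -/
open PowerSeries Finset

/-- triangular indicator series -/
noncomputable def psi : PowerSeries (ZMod 2) :=
  open Classical in PowerSeries.mk fun n => if ∃ y : ℤ, y ^ 2 = 8 * n + 1 then 1 else 0

lemma coeff_pent (n : ℕ) [Decidable (∃ x : ℤ, x % 3 = 2 ∧ x ^ 2 = 24 * n + 1)] :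
    (pentagonalSeries (ZMod 2)).coeff n =
      if ∃ x : ℤ, x % 3 = 2 ∧ x ^ 2 = 24 * n + 1 then 1 else 0 := by
  split_ifs with h
  · obtain ⟨x, hx, hx2⟩ := h
    have hodd : x % 2 = 1 := by
      rcases Int.emod_two_eq_zero_or_one x with h | h
      · obtain ⟨t, rfl⟩ : ∃ t, x = 2 * t := ⟨x / 2, by omega⟩
        ring_nf at hx2; omega
      · exact h
    obtain ⟨k, rfl⟩ : ∃ k, x = 6 * k - 1 := ⟨(x + 1) / 6, by omega⟩
    have h2 := two_mul_natCast_pentagonal k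
    have : pentagonal k = n := by
      zify
      nlinarith
    rw [← this, coeff_pentagonalSeries_pentagonal]
    rcases Int.even_or_odd k with hk | hk
    · simp [Int.negOnePow_even _ hk]
    · simp [Int.negOnePow_odd _ hk]
  · apply coeff_pentagonalSeries_eq_zero
    rintro ⟨k, hk⟩
    apply h
    refine ⟨6 * k - 1, by omega, ?_⟩
    have h2 := two_mul_natCast_pentagonal k
    rw [hk] at h2
    nlinarith

lemma psi_coeff (n : ℕ) [Decidable (∃ y : ℤ, y ^ 2 = 8 * n + 1)] :
    psi.coeff n = if ∃ y : ℤ, y ^ 2 = 8 * n + 1 then 1 else 0 := by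
  simp [psi]

/-- sum over a finite set with an involution reduces to fixed points. -/
lemma sum_fixed {α : Type*} [DecidableEq α] (S : Finset α) (g : α → α)
    (hg : ∀ a ∈ S, g a ∈ S) (hgg : ∀ a ∈ S, g (g a) = a) :
    (∑ _a ∈ S, (1 : ZMod 2)) = ∑ a ∈ S with g a = a, (1 : ZMod 2) := by
  rw [← Finset.sum_filter_add_sum_filter_not S (fun a => g a = a)]
  convert add_zero _
  refine Finset.sum_involution (fun a _ => g a) ?_ ?_ ?_ ?_
  · intros; decide
  · intro _ ha _; exact (Finset.mem_filter.1 ha).2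
  · intro a ha
    rw [Finset.mem_filter] at ha ⊢
    refine ⟨hg a ha.1, fun h => ha.2 ?_⟩
    rw [hgg a ha.1] at h; exact h.symm
  · intro a ha; exact hgg a (Finset.mem_filter.1 ha).1

lemma expand_two (f : PowerSeries (ZMod 2)) : expand 2 (by norm_num) f = f ^ 2 := by
  have h := MvPowerSeries.map_frobenius_expand (R := ZMod 2) (σ := Unit) 2 (by norm_num) (f := f)
  rw [ZMod.frobenius_zmod] at h
  exact h

lemma expand_four (f : PowerSeries (ZMod 2)) : expand 4 (by norm_num) f = f ^ 4 := by
  have h := expand_mul 2 (by norm_num) 2 (by norm_num) f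
  simp only [expand_two, Nat.reduceMul] at h
  rw [h]; ring

open PowerSeries.WithPiTopology

lemma hasProd_expand_s2 (p : ℕ) (hp : p ≠ 0) {f : ℕ → PowerSeries (ZMod 2)} {a}
    (h : HasProd f a) : HasProd (fun i => expand p hp (f i)) (expand p hp a) := by
  refine HasProd.map h (expand p hp : _ →ₐ[ZMod 2] _) ?_
  rw [continuous_iff_continuousAt]
  intro x
  rw [ContinuousAt, tendsto_iff_coeff_tendsto]
  intro d
  simp only [coeff_expand]
  split_ifs
  · exact (continuous_coeff _ _).continuousAt
  · exact tendsto_const_nhds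

lemma hasProd_pent (p : ℕ) (hp : p ≠ 0) :
    HasProd (fun i => if p ∣ i + 1 then (1 - X ^ (i+1) : PowerSeries (ZMod 2)) else 1)
      (expand p hp (pentagonalSeries (ZMod 2))) := by
  have h := hasProd_expand_s2 p hp (hasProd_one_sub_X_pow (ZMod 2))
  have hi : Function.Injective (fun i : ℕ => p * (i + 1) - 1) := by
    intro a b hab
    have h1 : 0 < p * (a+1) := by positivity
    have h2 : 0 < p * (b+1) := by positivity
    have : p * (a+1) = p * (b + 1) := by simp only at hab; omega
    have := Nat.eq_of_mul_eq_mul_left (by omega) this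
    omega
  rw [← hi.hasProd_iff]
  · convert h using 2 with i
    have h1 : 0 < p * (i+1) := by positivity
    have : p * (i + 1) - 1 + 1 = p * (i+1) := by omega
    simp [this, pow_mul]
  · intro x hx
    rw [if_neg]
    rintro ⟨k, hk⟩
    apply hx
    refine ⟨k - 1, ?_⟩
    have : k ≠ 0 := by rintro rfl; simp at hk
    have : k - 1 + 1 = k := by omega
    simp only [this]; omega

noncomputable def G : PowerSeries (ZMod 2) :=
  PowerSeries.mk fun n => (#(Nat.Partition.restricted n (fun i => ¬ 3 ∣ i ∧ ¬ 4 ∣ i)) : ZMod 2)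

lemma G_eq : G * pentagonalSeries (ZMod 2) * expand 12 (by norm_num) (pentagonalSeries (ZMod 2)) =
    expand 3 (by norm_num) (pentagonalSeries (ZMod 2)) * expand 4 (by norm_num) (pentagonalSeries (ZMod 2)) := by
  have h1 := ((Nat.Partition.hasProd_powerSeriesMk_card_restricted (ZMod 2) (fun i => ¬ 3 ∣ i ∧ ¬ 4 ∣ i)).mul
    (hasProd_one_sub_X_pow (ZMod 2))).mul (hasProd_pent 12 (by norm_num))
  have h2 := (hasProd_pent 3 (by norm_num)).mul (hasProd_pent 4 (by norm_num))
  refine HasProd.unique (h1.congr_fun ?_) h2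
  intro i
  have e : (12 ∣ i + 1) ↔ (3 ∣ i + 1 ∧ 4 ∣ i + 1) := by omega
  by_cases a : 3 ∣ i + 1 <;> by_cases b : 4 ∣ i + 1 <;> simp [e, a, b]
  simp_rw [pow_mul]
  rw [tsum_pow_mul_one_sub_of_constantCoeff_eq_zero (by simp)]

lemma expand_comp (r p q : ℕ) (hr : r ≠ 0) (hp : p ≠ 0) (hq : q ≠ 0) (h : r = p * q)
    (f : PowerSeries (ZMod 2)) : expand r hr f = expand p hp (expand q hq f) := by
  subst h
  exact expand_mul p hp q hq f

lemma sq_odd8 (z : ℤ) (h : z % 2 = 1) : z ^ 2 % 8 = 1 := by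
  have : z % 8 = 1 ∨ z % 8 = 3 ∨ z % 8 = 5 ∨ z % 8 = 7 := by omega
  rcases this with h | h | h | h <;> simp [pow_two, Int.mul_emod, h]

lemma sq_odd3 (z : ℤ) (h : z % 3 ≠ 0) : z ^ 2 % 3 = 1 := by
  have : z % 3 = 1 ∨ z % 3 = 2 := by omega
  rcases this with h | h <;> simp [pow_two, Int.mul_emod, h]

lemma odd_of_sq {z : ℤ} {n : ℤ} (h : z ^ 2 = 2 * n + 1) : z % 2 = 1 := by
  rcases Int.emod_two_eq_zero_or_one z with h' | h'
  · have : z ^ 2 % 2 = 0 := by simp [pow_two, Int.mul_emod, h']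
    omega
  · exact h'

/-- `(z^2-1)/8` -/
def tr (z : ℤ) : ℕ := ((z ^ 2 - 1) / 8).toNat

lemma tr_spec {z : ℤ} (h : z % 2 = 1) : z ^ 2 = 8 * (tr z : ℤ) + 1 := by
  have h1 := sq_odd8 z h
  have h2 : 0 ≤ z ^ 2 := sq_nonneg z
  unfold tr
  omega

/-- `(z^2-1)/24` -/
def pe (z : ℤ) : ℕ := ((z ^ 2 - 1) / 24).toNat

lemma pe_spec {z : ℤ} (h : z % 2 = 1) (h3 : z % 3 ≠ 0) : z ^ 2 = 24 * (pe z : ℤ) + 1 := by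
  have h1 := sq_odd8 z h
  have h1 := sq_odd3 z h3
  have h2 : 0 ≤ z ^ 2 := sq_nonneg z
  unfold pe
  omega

lemma box {u : ℤ} {M : ℤ} (h : u ^ 2 ≤ M) : -M ≤ u ∧ u ≤ M := by
  constructor <;> nlinarith [sq_nonneg (u - 1), sq_nonneg (u + 1), sq_nonneg u]

lemma par_odd {u v n : ℤ} (h : u ^ 2 + 3 * v ^ 2 = 2 * n + 1) : (u + v) % 2 = 1 := by
  have : (u + v) ^ 2 = 2 * (n + u * v - v ^ 2) + 1 := by linarith [add_sq u v]
  exact odd_of_sq this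

lemma coeff_ind (A B : ℕ → Prop) [DecidablePred A] [DecidablePred B] (f g : PowerSeries (ZMod 2))
    (hf : ∀ n, f.coeff n = if A n then 1 else 0) (hg : ∀ n, g.coeff n = if B n then 1 else 0) (N : ℕ) :
    (f * g).coeff N = ∑ p ∈ antidiagonal N with A p.1 ∧ B p.2, 1 := by
  rw [coeff_mul, Finset.sum_filter]
  refine Finset.sum_congr rfl fun p _ => ?_
  rw [hf, hg]
  by_cases a : A p.1 <;> by_cases b : B p.2 <;> simp [a, b]

lemma pent_mul_psi : pentagonalSeries (ZMod 2) * psi = pentagonalSeries (ZMod 2) ^ 4 := by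
  classical
  rw [← expand_four]
  ext N
  rw [coeff_ind (fun n => ∃ x : ℤ, x % 3 = 2 ∧ x ^ 2 = 24 * n + 1) (fun n => ∃ y : ℤ, y ^ 2 = 8 * n + 1)
    _ _ (fun n => coeff_pent n) (fun n => psi_coeff n)]
  let M : ℤ := 6 * N + 1
  let S : Finset (ℤ × ℤ) := (Icc (-M) M ×ˢ Icc (-M) M).filter
    fun p => p.1 ^ 2 + 3 * p.2 ^ 2 = 6 * N + 1 ∧ p.1 % 3 = 2
  have hS : ∀ u v : ℤ, (u, v) ∈ S ↔ u ^ 2 + 3 * v ^ 2 = 6 * N + 1 ∧ u % 3 = 2 := by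
    intro u v
    simp only [S, Finset.mem_filter, Finset.mem_product, Finset.mem_Icc, and_iff_right_iff_imp]
    rintro ⟨h, _⟩
    have h1 : u ^ 2 ≤ M := by nlinarith [sq_nonneg v]
    have h2 : v ^ 2 ≤ M := by nlinarith [sq_nonneg u, sq_nonneg v]
    exact ⟨box h1, box h2⟩
  have key : (∑ p ∈ S, (1 : ZMod 2)) = ∑ p ∈ antidiagonal N with
      (∃ x : ℤ, x % 3 = 2 ∧ x ^ 2 = 24 * p.1 + 1) ∧ (∃ y : ℤ, y ^ 2 = 8 * p.2 + 1), 1 := by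
    refine Finset.sum_bij (fun p _ => (pe (p.1 + 3 * p.2), tr (p.1 - p.2))) ?_ ?_ ?_ ?_
    · rintro ⟨u, v⟩ h
      rw [hS] at h
      have o := par_odd (u := u) (v := v) (n := 3 * N) (by linarith [h.1])
      have h1 := pe_spec (z := u + 3 * v) (by omega) (by omega)
      have h2 := tr_spec (z := u - v) (by omega)
      simp only [Finset.mem_filter, HasAntidiagonal.mem_antidiagonal]
      refine ⟨?_, ⟨_, by omega, h1⟩, _, h2⟩
      zify
      nlinarith [h.1]
    · rintro ⟨u, v⟩ h ⟨u', v'⟩ h' e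
      rw [hS] at h h'
      have o := par_odd (u := u) (v := v) (n := 3 * N) (by linarith [h.1])
      have h1 := pe_spec (z := u + 3 * v) (by omega) (by omega)
      have h2 := tr_spec (z := u - v) (by omega)
      have o' := par_odd (u := u') (v := v') (n := 3 * N) (by linarith [h'.1])
      have h1' := pe_spec (z := u' + 3 * v') (by omega) (by omega)
      have h2' := tr_spec (z := u' - v') (by omega)
      simp only [Prod.mk.injEq] at e
      rw [e.1, ← h1', sq_eq_sq_iff_eq_or_eq_neg] at h1
      rw [e.2, ← h2', sq_eq_sq_iff_eq_or_eq_neg] at h2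
      simp only [Prod.mk.injEq]
      omega
    · rintro ⟨a, b⟩ h
      simp only [Finset.mem_filter, HasAntidiagonal.mem_antidiagonal] at h
      obtain ⟨hab, ⟨x, hx3, hx⟩, y, hy⟩ := h
      have ox := odd_of_sq (z := x) (n := 12 * a) (by linarith)
      have oy := odd_of_sq (z := y) (n := 4 * b) (by linarith)
      obtain ⟨y, hy, v, hv⟩ : ∃ y : ℤ, y ^ 2 = 8 * b + 1 ∧ ∃ v, x = y + 4 * v := by
        by_cases hm : (x - y) % 4 = 0
        · exact ⟨y, hy, (x - y) / 4, by omega⟩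
        · exact ⟨-y, by rw [neg_sq, hy], (x + y) / 4, by omega⟩
      have oy := odd_of_sq (z := y) (n := 4 * b) (by linarith)
      refine ⟨(y + v, v), ?_, ?_⟩
      · rw [hS]
        subst hv
        zify at hab
        exact ⟨by nlinarith, by omega⟩
      · have h1 := pe_spec (z := x) (by omega) (by omega)
        have h2 := tr_spec (z := y) (by omega)
        have e1 : y + v + 3 * v = x := by omega
        have e2 : y + v - v = y := by omega
        simp only [e1, e2, Prod.mk.injEq]
        omega
    · intros; rfl
  rw [← key, sum_fixed S (fun p => (p.1, -p.2))]
  · rw [coeff_expand]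
    split_ifs with h4
    · rw [coeff_pent]
      obtain ⟨n, rfl⟩ := h4
      rw [Nat.mul_div_cancel_left _ (by norm_num)]
      split_ifs with hx
      · obtain ⟨x, hx3, hx⟩ := hx
        rw [Finset.sum_eq_single_of_mem (x, 0)]
        · simp [hS, hx3, hx]; ring
        · rintro ⟨u, v⟩ h hne
          exfalso
          rw [Finset.mem_filter, hS] at h
          simp only [Prod.mk.injEq, true_and] at h
          obtain rfl : v = 0 := by omega
          push_cast at h
          have : u ^ 2 = x ^ 2 := by linarith [h.1.1]
          rw [sq_eq_sq_iff_eq_or_eq_neg] at this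
          apply hne
          simp only [Prod.mk.injEq, and_true]
          omega
      · rw [Finset.sum_eq_zero]
        rintro ⟨u, v⟩ h
        rw [Finset.mem_filter, hS] at h
        simp only [Prod.mk.injEq, true_and] at h
        obtain rfl : v = 0 := by omega
        push_cast at h
        exact absurd ⟨u, h.1.2, by linarith [h.1.1]⟩ hx
    · rw [Finset.sum_eq_zero]
      rintro ⟨u, v⟩ h
      rw [Finset.mem_filter, hS] at h
      simp only [Prod.mk.injEq, true_and] at h
      obtain rfl : v = 0 := by omega
      have := sq_odd8 u (odd_of_sq (z := u) (n := 3 * N) (by linarith [h.1.1]))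
      omega
  · rintro ⟨u, v⟩ h
    rw [hS] at h ⊢
    simpa using h
  · rintro ⟨u, v⟩ h
    simp

lemma coeff_expand_psi (p : ℕ) (hp : p ≠ 0)
    (hodd : ∀ (y : ℤ) (n : ℕ), p * y ^ 2 = 8 * n + p → y % 2 = 1) (n : ℕ)
    [Decidable (∃ y : ℤ, p * y ^ 2 = 8 * n + p)] :
    (expand p hp psi).coeff n = if ∃ y : ℤ, p * y ^ 2 = 8 * n + p then 1 else 0 := by
  classical
  rw [coeff_expand]
  have hp' : (p : ℤ) ≠ 0 := by exact_mod_cast hp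
  by_cases h : ∃ y : ℤ, p * y ^ 2 = 8 * n + p
  · rw [if_pos h]
    obtain ⟨y, hy⟩ := h
    have ho := tr_spec (hodd y n hy)
    have hn : n = p * tr y := by
      zify
      rw [ho] at hy
      linarith
    rw [hn, if_pos ⟨_, rfl⟩, Nat.mul_div_cancel_left _ (by omega), psi_coeff, if_pos ⟨y, ho⟩]
  · rw [if_neg h]
    split_ifs with hd
    · obtain ⟨c, rfl⟩ := hd
      rw [Nat.mul_div_cancel_left _ (by omega), psi_coeff, if_neg]
      rintro ⟨y, hy⟩
      exact h ⟨y, by rw [hy]; push_cast; ring⟩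
    · rfl

lemma rhs_coeff (N : ℕ) [Decidable (∃ u : ℤ, u ^ 2 = 2 * N + 1)]
    [Decidable (∃ v : ℤ, 3 * v ^ 2 = 2 * N + 1)] :
    (expand 4 (by norm_num) psi + X * expand 12 (by norm_num) psi).coeff N =
    (if ∃ u : ℤ, u ^ 2 = 2 * N + 1 then 1 else 0) + (if ∃ v : ℤ, 3 * v ^ 2 = 2 * N + 1 then 1 else 0) := by
  classical
  rw [map_add]
  congr 1
  · rw [coeff_expand_psi]
    · refine if_congr (exists_congr fun u => ?_) rfl rfl
      push_cast
      constructor <;> intro h <;> linarith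
    · intro y n h
      push_cast at h
      exact odd_of_sq (n := n) (by linarith)
  · rcases N with _ | N
    · rw [coeff_zero_X_mul, if_neg]
      rintro ⟨v, hv⟩
      simp at hv
      omega
    · rw [coeff_succ_X_mul, coeff_expand_psi]
      · refine if_congr (exists_congr fun u => ?_) rfl rfl
        push_cast
        constructor <;> intro h <;> linarith
      · intro y n h
        push_cast at h
        exact odd_of_sq (n := n - y ^ 2 + 1) (by linarith)

lemma psi_mul_psi : psi * expand 3 (by norm_num) psi =
    expand 4 (by norm_num) psi + X * expand 12 (by norm_num) psi := by
  classical
  ext N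
  have h3 : ∀ n : ℕ, (expand 3 (by norm_num) psi).coeff n =
      if ∃ y : ℤ, 3 * y ^ 2 = 8 * n + 3 then 1 else 0 := by
    intro n
    rw [coeff_expand_psi]
    · push_cast; rfl
    · intro y n h
      push_cast at h
      exact odd_of_sq (n := 4 * n - y ^ 2 + 1) (by linarith)
  rw [rhs_coeff, coeff_ind (fun n => ∃ y : ℤ, y ^ 2 = 8 * n + 1) (fun n => ∃ y : ℤ, 3 * y ^ 2 = 8 * n + 3)
    _ _ (fun n => psi_coeff n) h3]
  let M : ℤ := 2 * N + 1
  let S : Finset (ℤ × ℤ) := (Icc (-M) M ×ˢ Icc (-M) M).filter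
    fun p => p.1 ^ 2 + 3 * p.2 ^ 2 = 2 * N + 1 ∧ 0 < p.1 + 3 * p.2
  have hS : ∀ u v : ℤ, (u, v) ∈ S ↔ u ^ 2 + 3 * v ^ 2 = 2 * N + 1 ∧ 0 < u + 3 * v := by
    intro u v
    simp only [S, Finset.mem_filter, Finset.mem_product, Finset.mem_Icc, and_iff_right_iff_imp]
    rintro ⟨h, _⟩
    have h1 : u ^ 2 ≤ M := by nlinarith [sq_nonneg v]
    have h2 : v ^ 2 ≤ M := by nlinarith [sq_nonneg u, sq_nonneg v]
    exact ⟨box h1, box h2⟩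
  have key : (∑ p ∈ S, (1 : ZMod 2)) = ∑ p ∈ antidiagonal N with
      (∃ x : ℤ, x ^ 2 = 8 * p.1 + 1) ∧ (∃ y : ℤ, 3 * y ^ 2 = 8 * p.2 + 3), 1 := by
    refine Finset.sum_bij (fun p _ => (tr (p.1 + 3 * p.2), 3 * tr (p.1 - p.2))) ?_ ?_ ?_ ?_
    · rintro ⟨u, v⟩ h
      rw [hS] at h
      have o := par_odd (u := u) (v := v) (n := N) (by linarith [h.1])
      have h1 := tr_spec (z := u + 3 * v) (by omega)
      have h2 := tr_spec (z := u - v) (by omega)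
      simp only [Finset.mem_filter, HasAntidiagonal.mem_antidiagonal]
      refine ⟨?_, ⟨_, h1⟩, u - v, by push_cast; linarith⟩
      zify
      nlinarith [h.1]
    · rintro ⟨u, v⟩ h ⟨u', v'⟩ h' e
      rw [hS] at h h'
      have o := par_odd (u := u) (v := v) (n := N) (by linarith [h.1])
      have h1 := tr_spec (z := u + 3 * v) (by omega)
      have h2 := tr_spec (z := u - v) (by omega)
      have o' := par_odd (u := u') (v := v') (n := N) (by linarith [h'.1])
      have h1' := tr_spec (z := u' + 3 * v') (by omega)
      have h2' := tr_spec (z := u' - v') (by omega)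
      simp only [Prod.mk.injEq] at e
      rw [e.1, ← h1', sq_eq_sq_iff_eq_or_eq_neg] at h1
      have e2 : tr (u - v) = tr (u' - v') := by omega
      rw [e2, ← h2', sq_eq_sq_iff_eq_or_eq_neg] at h2
      simp only [Prod.mk.injEq]
      omega
    · rintro ⟨a, b⟩ h
      simp only [Finset.mem_filter, HasAntidiagonal.mem_antidiagonal] at h
      obtain ⟨hab, ⟨x, hx⟩, y, hy⟩ := h
      obtain ⟨x, hx, hx0⟩ : ∃ x : ℤ, x ^ 2 = 8 * a + 1 ∧ 0 ≤ x :=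
        ⟨|x|, by rw [sq_abs, hx], abs_nonneg x⟩
      have ox := odd_of_sq (z := x) (n := 4 * a) (by linarith)
      have oy := odd_of_sq (z := y) (n := 4 * b - y ^ 2 + 1) (by linarith)
      obtain ⟨y, hy, v, hv⟩ : ∃ y : ℤ, 3 * y ^ 2 = 8 * b + 3 ∧ ∃ v, x = y + 4 * v := by
        by_cases hm : (x - y) % 4 = 0
        · exact ⟨y, hy, (x - y) / 4, by omega⟩
        · exact ⟨-y, by rw [neg_sq, hy], (x + y) / 4, by omega⟩
      have oy := odd_of_sq (z := y) (n := 4 * b - y ^ 2 + 1) (by linarith)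
      refine ⟨(y + v, v), ?_, ?_⟩
      · rw [hS]
        subst hv
        zify at hab
        exact ⟨by nlinarith, by omega⟩
      · have h1 := tr_spec (z := x) (by omega)
        have h2 := tr_spec (z := y) (by omega)
        have e1 : y + v + 3 * v = x := by omega
        have e2 : y + v - v = y := by omega
        simp only [e1, e2, Prod.mk.injEq]
        omega
    · intros; rfl
  rw [← key, sum_fixed S (fun p => if 0 < p.1 - 3 * p.2 then (p.1, -p.2) else (-p.1, p.2))]
  · have split : (∑ p ∈ S with (if 0 < p.1 - 3 * p.2 then (p.1, -p.2) else (-p.1, p.2)) = p, (1 : ZMod 2))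
        = (∑ p ∈ S with p.2 = 0, 1) + ∑ p ∈ S with p.1 = 0, 1 := by
      simp only [Finset.sum_filter]
      rw [← Finset.sum_add_distrib]
      refine Finset.sum_congr rfl ?_
      rintro ⟨u, v⟩ h
      rw [hS] at h
      have o := par_odd (u := u) (v := v) (n := N) (by linarith [h.1])
      by_cases hv : v = 0
      · have : u ≠ 0 := by omega
        have : 0 < u := by omega
        simp [hv, *]
      · by_cases hu : u = 0
        · have h3 : ¬ (3 * v < 0) := by omega
          simp [hu, hv, h3]
        · simp only [hu, hv, if_false]
          rw [if_neg]
          · simp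
          · split_ifs <;> simp only [Prod.mk.injEq] <;> omega
    rw [split]
    congr 1
    · split_ifs with hx
      · obtain ⟨x, hx⟩ := hx
        have ox := odd_of_sq hx
        rw [Finset.sum_eq_single_of_mem (|x|, 0)]
        · simp only [Finset.mem_filter, hS, sq_abs]
          refine ⟨⟨by linarith, ?_⟩, trivial⟩
          have : x ≠ 0 := by omega
          have := abs_pos.2 this
          omega
        · rintro ⟨u, v⟩ h hne
          exfalso
          rw [Finset.mem_filter, hS] at h
          obtain ⟨h, rfl : v = 0⟩ := h
          have : u ^ 2 = x ^ 2 := by linarith [h.1]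
          rw [sq_eq_sq_iff_abs_eq_abs, abs_of_pos (by omega : 0 < u)] at this
          exact hne (by rw [this])
      · rw [Finset.sum_eq_zero]
        rintro ⟨u, v⟩ h
        rw [Finset.mem_filter, hS] at h
        obtain ⟨h, rfl : v = 0⟩ := h
        exact absurd ⟨u, by linarith [h.1]⟩ hx
    · split_ifs with hx
      · obtain ⟨x, hx⟩ := hx
        have ox := odd_of_sq (z := x) (n := N - x ^ 2) (by linarith)
        rw [Finset.sum_eq_single_of_mem (0, |x|)]
        · simp only [Finset.mem_filter, hS, sq_abs]
          refine ⟨⟨by linarith, ?_⟩, trivial⟩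
          have : x ≠ 0 := by omega
          have := abs_pos.2 this
          omega
        · rintro ⟨u, v⟩ h hne
          exfalso
          rw [Finset.mem_filter, hS] at h
          obtain ⟨h, rfl : u = 0⟩ := h
          have : v ^ 2 = x ^ 2 := by linarith [h.1]
          rw [sq_eq_sq_iff_abs_eq_abs, abs_of_pos (by omega : 0 < v)] at this
          exact hne (by rw [this])
      · rw [Finset.sum_eq_zero]
        rintro ⟨u, v⟩ h
        rw [Finset.mem_filter, hS] at h
        obtain ⟨h, rfl : u = 0⟩ := h
        exact absurd ⟨v, by linarith [h.1]⟩ hx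
  · rintro ⟨u, v⟩ h
    rw [hS] at h
    have o := par_odd (u := u) (v := v) (n := N) (by linarith [h.1])
    dsimp only
    split_ifs
    · rw [hS]; rw [neg_sq]; exact ⟨h.1, by omega⟩
    · rw [hS]; rw [neg_sq]; exact ⟨h.1, by omega⟩
  · rintro ⟨u, v⟩ h
    rw [hS] at h
    by_cases hp : 0 < u - 3 * v
    · have : 0 < u - 3 * (-v) := by omega
      simp only [hp, if_true, this, neg_neg]
    · have : ¬ 0 < -u - 3 * v := by omega
      simp only [hp, if_false, this, neg_neg]

lemma even_odd_inj {a b c d : PowerSeries (ZMod 2)}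
    (h : expand 2 (by norm_num) a + X * expand 2 (by norm_num) b =
      expand 2 (by norm_num) c + X * expand 2 (by norm_num) d) : a = c ∧ b = d := by
  constructor
  · ext n
    have := congrArg (coeff (2 * n)) h
    rcases n with _ | n
    · simpa using this
    · have e : 2 * (n + 1) = (2 * n + 1) + 1 := by ring
      have e' : ¬ 2 ∣ 2 * n + 1 := by omega
      simp only [map_add, coeff_expand_mul] at this
      rw [e, coeff_succ_X_mul, coeff_succ_X_mul, coeff_expand_of_not_dvd _ _ _ e',
        coeff_expand_of_not_dvd _ _ _ e'] at this
      simpa using this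
  · ext n
    have := congrArg (coeff (2 * n + 1)) h
    have e' : ¬ 2 ∣ 2 * n + 1 := by omega
    simpa [coeff_succ_X_mul, coeff_expand_of_not_dvd _ _ _ e'] using this

/-- even part of `G` -/
noncomputable def GE : PowerSeries (ZMod 2) := PowerSeries.mk fun n => G.coeff (2 * n)
/-- odd part of `G` -/
noncomputable def GO : PowerSeries (ZMod 2) := PowerSeries.mk fun n => G.coeff (2 * n + 1)

lemma G_split : G = expand 2 (by norm_num) GE + X * expand 2 (by norm_num) GO := by
  ext n
  rcases Nat.even_or_odd' n with ⟨k, rfl | rfl⟩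
  · rcases k with _ | k
    · simp [GE]
    · have e : 2 * (k + 1) = (2 * k + 1) + 1 := by ring
      have e' : ¬ 2 ∣ 2 * k + 1 := by omega
      rw [map_add, coeff_expand_mul, e, coeff_succ_X_mul, coeff_expand_of_not_dvd _ _ _ e']
      simp [GE, e]
  · have e' : ¬ 2 ∣ 2 * k + 1 := by omega
    simp [GO, coeff_succ_X_mul, coeff_expand_of_not_dvd _ _ _ e']

lemma pent_ne : pentagonalSeries (ZMod 2) ≠ 0 := by
  intro h
  have := congrArg (coeff 0) h
  classical
  rw [coeff_pent, if_pos ⟨-1, by norm_num⟩] at this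
  simp at this

lemma psi_eq : psi = pentagonalSeries (ZMod 2) ^ 3 := by
  apply mul_left_cancel₀ pent_ne
  rw [pent_mul_psi]; ring

lemma expand_ne (p : ℕ) (hp : p ≠ 0) {f : PowerSeries (ZMod 2)} (h : f ≠ 0) : expand p hp f ≠ 0 := by
  intro h0
  apply h
  ext n
  rw [← coeff_expand_mul p hp, h0]; simp

lemma G_psi : G * expand 3 (by norm_num) psi = psi := by
  have h := G_eq
  have e12 : expand 12 (by norm_num) (pentagonalSeries (ZMod 2)) =
      expand 3 (by norm_num) (pentagonalSeries (ZMod 2)) ^ 4 := by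
    rw [← map_pow, ← expand_four]
    exact expand_comp 12 3 4 _ _ _ (by norm_num) _
  rw [e12, expand_four] at h
  rw [psi_eq, map_pow]
  apply mul_left_cancel₀ (mul_ne_zero pent_ne (expand_ne 3 (by norm_num) pent_ne))
  linear_combination h

lemma GE_mul_GO : GE * GO = expand 2 (by norm_num) psi := by
  have hpsi : psi ≠ 0 := by rw [psi_eq]; exact pow_ne_zero _ pent_ne
  have hT := expand_ne 3 (by norm_num) hpsi
  have h1 : G * expand 2 two_ne_zero (expand 3 three_ne_zero psi) =
      expand 2 two_ne_zero (expand 2 two_ne_zero psi) +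
      X * expand 2 two_ne_zero (expand 3 three_ne_zero psi ^ 2) := by
    have e4 := expand_comp 4 2 2 (by norm_num) two_ne_zero two_ne_zero (by norm_num) psi
    have e6 := expand_comp 6 2 3 (by norm_num) two_ne_zero three_ne_zero (by norm_num) psi
    have e12 := expand_comp 12 2 6 (by norm_num) two_ne_zero (by norm_num) (by norm_num) psi
    have h := psi_mul_psi
    rw [e4, e12, e6, expand_two (expand 3 three_ne_zero psi)] at h
    rw [← h, expand_two (expand 3 three_ne_zero psi), pow_two, ← mul_assoc, G_psi]
  rw [G_split, add_mul, mul_assoc, ← map_mul, ← map_mul] at h1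
  obtain ⟨h2, h3⟩ := even_odd_inj h1
  have h4 : GO = expand 3 (by norm_num) psi := by
    apply mul_right_cancel₀ hT
    rw [h3, pow_two]
  rw [h4, h2]

/-- single-colour count -/
def g (n : ℕ) : ℕ := #(Nat.Partition.restricted n (fun i => ¬ 3 ∣ i ∧ ¬ 4 ∣ i))

lemma sum_g (n : ℕ) : ∑ p ∈ antidiagonal (4 * n + 1), g p.1 * g p.2 =
    2 * ∑ p ∈ antidiagonal (2 * n), g (2 * p.1) * g (2 * p.2 + 1) := by
  rw [← Finset.sum_filter_add_sum_filter_not _ (fun p => p.1 % 2 = 0), two_mul]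
  congr 1
  · refine Finset.sum_nbij' (fun p => (p.1 / 2, p.2 / 2)) (fun q => (2 * q.1, 2 * q.2 + 1)) ?_ ?_ ?_ ?_ ?_
    · rintro ⟨a, b⟩ h
      simp at h ⊢; omega
    · rintro ⟨a, b⟩ h
      simp at h ⊢; omega
    · rintro ⟨a, b⟩ h
      simp at h ⊢; omega
    · rintro ⟨a, b⟩ h
      simp at h ⊢; omega
    · rintro ⟨a, b⟩ h
      simp at h
      have e1 : 2 * (a / 2) = a := by omega
      have e2 : 2 * (b / 2) + 1 = b := by omega
      simp only [e1, e2]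
  · refine Finset.sum_nbij' (fun p => (p.2 / 2, p.1 / 2)) (fun q => (2 * q.2 + 1, 2 * q.1)) ?_ ?_ ?_ ?_ ?_
    · rintro ⟨a, b⟩ h
      simp at h ⊢; omega
    · rintro ⟨a, b⟩ h
      simp at h ⊢; omega
    · rintro ⟨a, b⟩ h
      simp at h ⊢; omega
    · rintro ⟨a, b⟩ h
      simp at h ⊢; omega
    · rintro ⟨a, b⟩ h
      simp at h
      have e1 : 2 * (b / 2) = b := by omega
      have e2 : 2 * (a / 2) + 1 = a := by omega
      simp only [e1, e2]; ring

lemma K_mod (n : ℕ) : ((∑ p ∈ antidiagonal (2 * n), g (2 * p.1) * g (2 * p.2 + 1) : ℕ) : ZMod 2) = psi.coeff n := by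
  rw [← coeff_expand_mul 2 (by norm_num) psi n, ← GE_mul_GO, coeff_mul]
  push_cast
  simp [GE, GO, G, g]

lemma tri_iff (n : ℕ) : (∃ m : ℕ, 2 * n = m * (m + 1)) ↔ ∃ y : ℤ, y ^ 2 = 8 * n + 1 := by
  constructor
  · rintro ⟨m, hm⟩
    refine ⟨2 * m + 1, ?_⟩
    zify at hm
    linear_combination (-4) * hm
  · rintro ⟨y, hy⟩
    have o := odd_of_sq (z := y) (n := 4 * n) (by linarith)
    refine ⟨y.natAbs / 2, ?_⟩
    obtain ⟨k, hk⟩ : ∃ k, y.natAbs = 2 * k + 1 := ⟨y.natAbs / 2, by omega⟩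
    have e : y.natAbs / 2 = k := by omega
    rw [e]
    rw [← Int.natAbs_sq, hk] at hy
    zify
    push_cast at hy
    linarith

lemma colored_eq_s2 (N : ℕ) : coloredRegular 2 3 4 N = ∑ p ∈ antidiagonal N, g p.1 * g p.2 := by
  classical
  let s := (antidiagonal N).sigma (fun p => Nat.Partition.restricted p.1 (fun i => ¬ 3 ∣ i ∧ ¬ 4 ∣ i) ×ˢ
    Nat.Partition.restricted p.2 (fun i => ¬ 3 ∣ i ∧ ¬ 4 ∣ i))
  have hs : s.card = ∑ p ∈ antidiagonal N, g p.1 * g p.2 := by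
    simp [s, g, Finset.card_sigma, Finset.card_product]
  have f0 : ∀ A B : Multiset ℕ, ((A.map (fun i => (i, 0)) + B.map (fun i => (i, 1))).filter
      (fun x : ℕ × ℕ => x.2 = 0)).map Prod.fst = A := by
    intro A B
    simp [Multiset.filter_add, Multiset.filter_map, Multiset.map_map]
  have f1 : ∀ A B : Multiset ℕ, ((A.map (fun i => (i, 0)) + B.map (fun i => (i, 1))).filter
      (fun x : ℕ × ℕ => x.2 = 1)).map Prod.fst = B := by
    intro A B
    simp [Multiset.filter_add, Multiset.filter_map, Multiset.map_map]
  rw [← hs, coloredRegular, ← Fintype.card_coe s, ← Nat.card_eq_fintype_card]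
  symm
  refine Nat.card_congr (Equiv.ofBijective (fun x => ⟨x.1.2.1.parts.map (fun i => (i, 0)) +
    x.1.2.2.parts.map (fun i => (i, 1)), ?_, ?_⟩) ⟨?_, ?_⟩)
  · obtain ⟨⟨⟨a, b⟩, A, B⟩, h⟩ := x
    simp only [s, Finset.mem_sigma, Finset.mem_product, Nat.Partition.restricted, Finset.mem_filter] at h
    intro y hy
    rw [Multiset.mem_add, Multiset.mem_map, Multiset.mem_map] at hy
    rcases hy with ⟨i, hi, rfl⟩ | ⟨i, hi, rfl⟩
    · have := h.2.1.2 i hi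
      exact ⟨this.1, this.2, by norm_num⟩
    · have := h.2.2.2 i hi
      exact ⟨this.1, this.2, by norm_num⟩
  · obtain ⟨⟨⟨a, b⟩, A, B⟩, h⟩ := x
    simp only [s, Finset.mem_sigma, HasAntidiagonal.mem_antidiagonal] at h
    simp [Multiset.map_map, A.parts_sum, B.parts_sum, h.1]
  · rintro ⟨⟨⟨a, b⟩, A, B⟩, h⟩ ⟨⟨⟨a', b'⟩, A', B'⟩, h'⟩ e
    have e := congrArg Subtype.val e
    dsimp only at e A B A' B'
    have eA : A.parts = A'.parts := by rw [← f0 A.parts B.parts, e, f0]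
    have eB : B.parts = B'.parts := by rw [← f1 A.parts B.parts, e, f1]
    have ea : a = a' := by rw [← A.parts_sum, eA, A'.parts_sum]
    have eb : b = b' := by rw [← B.parts_sum, eB, B'.parts_sum]
    subst ea eb
    have := Nat.Partition.ext eA
    have := Nat.Partition.ext eB
    subst A' B'
    rfl
  · rintro ⟨M, hM, hsum⟩
    have hM2 : M = M.filter (fun x => x.2 = 0) + M.filter (fun x => x.2 = 1) := by
      conv_lhs => rw [← Multiset.filter_add_not (fun x => x.2 = 0) M]
      congr 1
      refine Multiset.filter_congr fun x hx => ?_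
      have := (hM x hx).2.2
      omega
    have hpos : ∀ c, ∀ i ∈ (M.filter (fun x => x.2 = c)).map Prod.fst, ¬ 3 ∣ i ∧ ¬ 4 ∣ i := by
      intro c i hi
      rw [Multiset.mem_map] at hi
      obtain ⟨x, hx, rfl⟩ := hi
      have := hM x (Multiset.mem_of_mem_filter hx)
      exact ⟨this.1, this.2.1⟩
    have hpos' : ∀ c, ∀ {i}, i ∈ (M.filter (fun x => x.2 = c)).map Prod.fst → 0 < i := by
      intro c i hi
      have := hpos c i hi
      omega
    have hm : ∀ c, ((M.filter (fun x => x.2 = c)).map Prod.fst).map (fun i => (i, c)) =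
        M.filter (fun x => x.2 = c) := by
      intro c
      rw [Multiset.map_map]
      conv_rhs => rw [← Multiset.map_id (M.filter (fun x => x.2 = c))]
      refine Multiset.map_congr rfl fun x hx => ?_
      have := Multiset.of_mem_filter hx
      ext <;> simp [this]
    refine ⟨⟨⟨(((M.filter (fun x => x.2 = 0)).map Prod.fst).sum,
      ((M.filter (fun x => x.2 = 1)).map Prod.fst).sum), ⟨_, hpos' 0, rfl⟩, ⟨_, hpos' 1, rfl⟩⟩, ?_⟩, ?_⟩
    · simp only [s, Finset.mem_sigma, Finset.mem_product, Nat.Partition.restricted, Finset.mem_filter,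
        HasAntidiagonal.mem_antidiagonal]
      refine ⟨?_, ⟨Finset.mem_univ _, hpos 0⟩, Finset.mem_univ _, hpos 1⟩
      rw [← Multiset.sum_add, ← Multiset.map_add, ← hM2, hsum]
    · apply Subtype.ext
      dsimp only
      rw [hm, hm, ← hM2]

theorem stmt_2 (n : ℕ) :
    ((∃ m : ℕ, 2 * n = m * (m + 1)) → coloredRegular 2 3 4 (4 * n + 1) ≡ 2 [MOD 4]) ∧
    ((¬ ∃ m : ℕ, 2 * n = m * (m + 1)) → coloredRegular 2 3 4 (4 * n + 1) ≡ 0 [MOD 4]) := by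
  classical
  have hK := K_mod n
  rw [colored_eq_s2, sum_g, tri_iff]
  rw [psi_coeff] at hK
  generalize (∑ p ∈ antidiagonal (2 * n), g (2 * p.1) * g (2 * p.2 + 1)) = K at *
  constructor
  · intro h
    rw [if_pos h] at hK
    have : K % 2 = 1 % 2 := (ZMod.natCast_eq_natCast_iff K 1 2).1 (by simpa using hK)
    unfold Nat.ModEq; omega
  · intro h
    rw [if_neg h] at hK
    have : K % 2 = 0 % 2 := (ZMod.natCast_eq_natCast_iff K 0 2).1 (by simpa using hK)
    unfold Nat.ModEq; omega
end

section
/- For every nonnegative integer n: (i) b^2_{3,4}(6n+4) ≡ 0 (mod 2); (ii) b^2_{3,4}(6n+2) ≡ b^3_3(n) (mod 2); (iii) b^2_{3,4}(12n+6) ≡ 0 (mod 2); (iv) b^2_{3,4}(12n) ≡ p(n) (mod 2), where p(n) is the number of unrestricted partitions of n. -/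
/-- `coloredLRegular k l n` is the number of `k`-colored `l`-regular partitions of `n`,
i.e. the coefficient of `q^n` in `∏_{j ≥ 1, l ∤ j} (1 - q^j)^{-k}`. -/
noncomputable def coloredLRegular (k l n : ℕ) : ℕ :=
  Nat.card {M : Multiset (ℕ × ℕ) //
    (∀ x ∈ M, ¬ l ∣ x.1 ∧ x.2 < k) ∧ (M.map Prod.fst).sum = n}

namespace S4

open Finset

/-- `k`-colored multisets with parts satisfying `p` and sum `n` -/
abbrev Col (p : ℕ → Prop) (k n : ℕ) : Type :=
  {M : Multiset (ℕ × ℕ) // (∀ x ∈ M, p x.1 ∧ x.2 < k) ∧ (M.map Prod.fst).sum = n}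

abbrev Unc (p : ℕ → Prop) (n : ℕ) : Type :=
  {M : Multiset ℕ // (∀ x ∈ M, p x) ∧ M.sum = n}

def glue (p : ℕ → Prop) (k n : ℕ) :
    (Σ ij : antidiagonal n, Col p k ij.1.1 × Unc p ij.1.2) → Col p (k + 1) n :=
  fun s => ⟨s.2.1.1 + s.2.2.1.map (fun x => (x, k)), by
    obtain ⟨⟨⟨i, j⟩, h⟩, ⟨a, ha, ha'⟩, ⟨b, hb, hb'⟩⟩ := s
    simp only [HasAntidiagonal.mem_antidiagonal] at h ha' hb'
    refine ⟨?_, ?_⟩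
    · intro x hx
      simp only [Multiset.mem_add, Multiset.mem_map] at hx
      rcases hx with hx | ⟨y, hy, rfl⟩
      · have := ha x hx
        exact ⟨this.1, by omega⟩
      · exact ⟨hb y hy, by simp⟩
    · simp [ha', hb', h]⟩

lemma filter_glue (k : ℕ) (a : Multiset (ℕ × ℕ)) (b : Multiset ℕ) (ha : ∀ x ∈ a, x.2 < k) :
    (a + b.map (fun x => (x, k))).filter (fun x => x.2 < k) = a ∧
    ((a + b.map (fun x => (x, k))).filter (fun x => ¬ x.2 < k)).map Prod.fst = b := by
  constructor
  · rw [Multiset.filter_add, Multiset.filter_eq_self.2 ha, Multiset.filter_eq_nil.2]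
    · simp
    · intro x hx
      simp only [Multiset.mem_map] at hx
      obtain ⟨y, _, rfl⟩ := hx
      simp
  · rw [Multiset.filter_add, Multiset.filter_eq_nil.2, Multiset.filter_eq_self.2]
    · simp
    · intro x hx
      simp only [Multiset.mem_map] at hx
      obtain ⟨y, _, rfl⟩ := hx
      simp
    · intro x hx
      simpa using ha x hx

lemma glue_bij (p : ℕ → Prop) (k n : ℕ) : Function.Bijective (glue p k n) := by
  constructor
  · rintro ⟨⟨⟨i, j⟩, h⟩, ⟨a, ha, ha'⟩, ⟨b, hb, hb'⟩⟩ ⟨⟨⟨i', j'⟩, h'⟩, ⟨c, hc, hc'⟩, ⟨d, hd, hd'⟩⟩ e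
    simp only [glue, Subtype.mk.injEq] at e
    have h1 := filter_glue k a b (fun x hx => (ha x hx).2)
    have h2 := filter_glue k c d (fun x hx => (hc x hx).2)
    rw [e] at h1
    obtain rfl : a = c := h1.1.symm.trans h2.1
    obtain rfl : b = d := h1.2.symm.trans h2.2
    simp only at ha' hb' hc' hd'
    subst ha' hb' hc' hd'
    rfl
  · rintro ⟨M, hM, hs⟩
    have key : M.filter (fun x => x.2 < k) +
        ((M.filter (fun x => ¬ x.2 < k)).map Prod.fst).map (fun x => (x, k)) = M := by
      conv_rhs => rw [← Multiset.filter_add_not (fun x : ℕ × ℕ => x.2 < k) M]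
      congr 1
      rw [Multiset.map_map]
      conv_rhs => rw [← Multiset.map_id (M.filter (fun x => ¬ x.2 < k))]
      apply Multiset.map_congr rfl
      intro x hx
      rw [Multiset.mem_filter] at hx
      have := hM x hx.1
      ext <;> simp <;> omega
    refine ⟨⟨⟨(((M.filter (fun x => x.2 < k)).map Prod.fst).sum,
      ((M.filter (fun x => ¬ x.2 < k)).map Prod.fst).sum), ?_⟩,
      ⟨M.filter (fun x => x.2 < k), ?_, rfl⟩,
      ⟨(M.filter (fun x => ¬ x.2 < k)).map Prod.fst, ?_, rfl⟩⟩, ?_⟩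
    · rw [HasAntidiagonal.mem_antidiagonal, ← hs, ← Multiset.sum_add, ← Multiset.map_add,
        Multiset.filter_add_not]
    · intro x hx
      rw [Multiset.mem_filter] at hx
      exact ⟨(hM x hx.1).1, hx.2⟩
    · intro x hx
      rw [Multiset.mem_map] at hx
      obtain ⟨y, hy, rfl⟩ := hx
      rw [Multiset.mem_filter] at hy
      exact (hM y hy.1).1
    · exact Subtype.ext key

/-- uncolored multisets are restricted partitions -/
def uncEquiv (p : ℕ → Prop) [DecidablePred p] (hp : ¬ p 0) (n : ℕ) :
    Unc p n ≃ {x // x ∈ Nat.Partition.restricted n p} where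
  toFun M := ⟨⟨M.1, fun {i} hi => Nat.pos_of_ne_zero (fun h => hp (h ▸ M.2.1 i hi)), M.2.2⟩, by
    simpa [Nat.Partition.restricted] using M.2.1⟩
  invFun q := ⟨q.1.parts, by
    have := q.2
    simp only [Nat.Partition.restricted, Finset.mem_filter] at this
    exact this.2, q.1.parts_sum⟩
  left_inv M := rfl
  right_inv q := rfl

lemma card_unc (p : ℕ → Prop) [DecidablePred p] (hp : ¬ p 0) (n : ℕ) :
    Nat.card (Unc p n) = #(Nat.Partition.restricted n p) := by
  rw [Nat.card_congr (uncEquiv p hp n)]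
  simp

lemma finite_unc (p : ℕ → Prop) (hp : ¬ p 0) (n : ℕ) : Finite (Unc p n) := by
  classical
  exact Finite.of_equiv _ (uncEquiv p hp n).symm

lemma finite_col (p : ℕ → Prop) (hp : ¬ p 0) (k n : ℕ) : Finite (Col p k n) := by
  induction k generalizing n with
  | zero =>
    have : Subsingleton (Col p 0 n) := by
      constructor
      rintro ⟨a, ha, _⟩ ⟨b, hb, _⟩
      have h1 : a = 0 := Multiset.eq_zero_of_forall_notMem (fun x hx => by simpa using ha x hx)
      have h2 : b = 0 := Multiset.eq_zero_of_forall_notMem (fun x hx => by simpa using hb x hx)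
      subst h1 h2
      rfl
    infer_instance
  | succ k ih =>
    have := finite_unc p hp
    exact Finite.of_equiv _ (Equiv.ofBijective _ (glue_bij p k n))

open PowerSeries in
lemma genfun_col (R : Type*) [CommSemiring R] (p : ℕ → Prop) [DecidablePred p] (hp : ¬ p 0)
    (k : ℕ) :
    (PowerSeries.mk fun n => (Nat.card (Col p k n) : R)) =
      (PowerSeries.mk fun n => (#(Nat.Partition.restricted n p) : R)) ^ k := by
  induction k with
  | zero =>
    ext n
    rw [pow_zero, coeff_one, coeff_mk]
    split_ifs with h
    · subst h
      have : Nat.card (Col p 0 0) = 1 := by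
        rw [Nat.card_eq_one_iff_unique]
        refine ⟨⟨?_⟩, ⟨⟨0, by simp⟩⟩⟩
        rintro ⟨a, ha, _⟩ ⟨b, hb, _⟩
        have h1 : a = 0 := Multiset.eq_zero_of_forall_notMem (fun x hx => by simpa using ha x hx)
        have h2 : b = 0 := Multiset.eq_zero_of_forall_notMem (fun x hx => by simpa using hb x hx)
        subst h1 h2
        rfl
      simp [this]
    · have : IsEmpty (Col p 0 n) := by
        constructor
        rintro ⟨a, ha, h'⟩
        have h1 : a = 0 := Multiset.eq_zero_of_forall_notMem (fun x hx => by simpa using ha x hx)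
        subst h1
        exact h (by simpa using h'.symm)
      simp
  | succ k ih =>
    rw [pow_succ, ← ih]
    ext n
    have f1 := finite_unc p hp
    have f2 := finite_col p hp k
    rw [coeff_mul, coeff_mk, ← Nat.card_congr (Equiv.ofBijective _ (glue_bij p k n)),
      Nat.card_sigma]
    simp only [Nat.card_prod, coeff_mk, card_unc p hp]
    push_cast
    exact Finset.sum_coe_sort (antidiagonal n)
      (fun ij => (Nat.card (Col p k ij.1) : R) * (#(Nat.Partition.restricted ij.2 p) : R))

section Shanks
variable {R : Type*} [CommRing R] (x : R)

/-- odd product -/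
def oddP (N : ℕ) : R := ∏ j ∈ range N, (1 - x ^ (2 * j + 1))
/-- even product over `s < j ≤ N` -/
def evenP (s N : ℕ) : R := ∏ j ∈ Ico s N, (1 - x ^ (2 * j + 2))

lemma evenP_top (s N : ℕ) (h : s ≤ N) :
    evenP x s (N + 1) = evenP x s N * (1 - x ^ (2 * N + 2)) := by
  rw [evenP, prod_Ico_succ_top h, evenP]

lemma evenP_bot (s N : ℕ) (h : s < N) :
    evenP x s N = (1 - x ^ (2 * s + 2)) * evenP x (s + 1) N := by
  rw [evenP, prod_eq_prod_Ico_succ_bot h, evenP]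

lemma shanks_tele (N m : ℕ) (hm : m ≤ N) :
    ∑ s ∈ range (m + 1), (evenP x s (N + 1) * oddP x s * x ^ (s * (2 * N + 3))
      - (1 - x ^ (2 * N + 1)) * (evenP x s N * oddP x s * x ^ (s * (2 * N + 1)))) =
      evenP x m N * oddP x (m + 1) * x ^ ((m + 1) * (2 * N + 1)) := by
  induction m with
  | zero =>
    rw [sum_range_one, evenP_top x 0 N (by omega)]
    simp [oddP]
    ring
  | succ m ih =>
    rw [sum_range_succ, ih (by omega), evenP_top x _ N hm, evenP_bot x m N (by omega)]
    have : oddP x (m + 1 + 1) = oddP x (m + 1) * (1 - x ^ (2 * (m + 1) + 1)) := by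
      rw [oddP, prod_range_succ, oddP]
    rw [this]
    ring

lemma shanks (N : ℕ) :
    oddP x N * ∑ i ∈ range (2 * N + 1), x ^ (i * (i + 1) / 2) =
    ∑ s ∈ range (N + 1), evenP x s N * oddP x s * x ^ (s * (2 * N + 1)) := by
  induction N with
  | zero => simp [oddP, evenP]
  | succ N ih =>
    have h1 := shanks_tele x N N le_rfl
    rw [sum_sub_distrib, ← mul_sum, ← ih, sub_eq_iff_eq_add] at h1
    rw [sum_range_succ _ (N + 1)]
    rw [show 2 * (N + 1) + 1 = 2 * N + 3 by ring, h1, sum_range_succ _ (2 * N + 2),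
      sum_range_succ _ (2 * N + 1)]
    have e1 : (2 * N + 1) * (2 * N + 1 + 1) / 2 = (N + 1) * (2 * N + 1) := by
      apply Nat.div_eq_of_eq_mul_left (by norm_num); ring
    have e2 : (2 * N + 2) * (2 * N + 2 + 1) / 2 = (N + 1) * (2 * N + 3) := by
      apply Nat.div_eq_of_eq_mul_left (by norm_num); ring
    rw [e1, e2]
    have : oddP x (N + 1) = oddP x N * (1 - x ^ (2 * N + 1)) := by
      rw [oddP, prod_range_succ, oddP]
    rw [this]
    simp [evenP]
    ring

lemma odd_mul_even (N : ℕ) :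
    oddP x N * evenP x 0 N = ∏ j ∈ range (2 * N), (1 - x ^ (j + 1)) := by
  induction N with
  | zero => simp [oddP, evenP]
  | succ N ih =>
    rw [show 2 * (N + 1) = 2 * N + 1 + 1 by ring, prod_range_succ, prod_range_succ, ← ih,
      evenP_top x 0 N (by omega)]
    have : oddP x (N + 1) = oddP x N * (1 - x ^ (2 * N + 1)) := by
      rw [oddP, prod_range_succ, oddP]
    rw [this]
    ring

end Shanks

open PowerSeries

abbrev K := ZMod 2

lemma frob (g : K⟦X⟧) : expand 2 two_ne_zero g = g ^ 2 := by
  have := MvPowerSeries.map_frobenius_expand (σ := Unit) (R := K) 2 two_ne_zero (f := g)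
  rw [ZMod.frobenius_zmod] at this
  rw [← this]
  exact (congrFun (congrArg DFunLike.coe (MvPowerSeries.map_id)) _).symm

open scoped Classical in
noncomputable def psi : K⟦X⟧ := PowerSeries.mk fun n => if ∃ k : ℕ, k * (k + 1) / 2 = n then 1 else 0

noncomputable abbrev f : K⟦X⟧ := pentagonalSeries K

lemma coeff_f (n : ℕ) [Decidable (∃ k : ℤ, pentagonal k = n)] :
    coeff n f = if ∃ k : ℤ, pentagonal k = n then 1 else 0 := by
  split_ifs with h
  · obtain ⟨k, rfl⟩ := h
    rw [coeff_pentagonalSeries_pentagonal]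
    rcases Int.even_or_odd k with h | h
    · simp [Int.negOnePow_even k h]
    · simp [Int.negOnePow_odd k h]
  · exact coeff_pentagonalSeries_eq_zero K (by simpa using h)

lemma tri_two (k : ℕ) : 2 * (k * (k + 1) / 2) = k * (k + 1) :=
  Nat.two_mul_div_two_of_even (Nat.even_mul_succ_self k)

lemma tri_mod (k m : ℕ) : k * (k + 1) / 2 ≠ 3 * m + 2 := by
  intro h
  have h2 := tri_two k
  rw [h] at h2
  have : k % 3 = 0 ∨ k % 3 = 1 ∨ k % 3 = 2 := by omega
  have h3 := congrArg (· % 3) h2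
  rcases this with h | h | h <;> simp [Nat.mul_mod, Nat.add_mod, h] at h3

lemma tri_zero (m : ℕ) : (∃ k : ℕ, k * (k + 1) / 2 = 3 * m) ↔ ∃ k : ℤ, pentagonal k = m := by
  constructor
  · rintro ⟨k, h⟩
    have h2 := tri_two k
    rw [h] at h2
    obtain ⟨j, rfl | rfl | rfl⟩ : ∃ j, k = 3 * j ∨ k = 3 * j + 1 ∨ k = 3 * j + 2 :=
      ⟨k / 3, by omega⟩
    · refine ⟨-j, ?_⟩
      have := two_mul_natCast_pentagonal_neg j
      zify at h2 ⊢
      linarith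
    · exfalso
      have h3 := congrArg (· % 3) h2
      simp [Nat.mul_mod, Nat.add_mod] at h3
    · refine ⟨j + 1, ?_⟩
      have := two_mul_natCast_pentagonal (j + 1)
      zify at h2 ⊢
      linarith
  · rintro ⟨k, rfl⟩
    have := two_mul_natCast_pentagonal k
    rcases le_or_gt k 0 with h | h
    · obtain ⟨j, rfl⟩ : ∃ j : ℕ, k = -j := ⟨k.natAbs, by omega⟩
      refine ⟨3 * j, ?_⟩
      have h2 := tri_two (3 * j)
      zify at h2 ⊢
      push_cast at *
      linarith
    · obtain ⟨j, rfl⟩ : ∃ j : ℕ, k = j + 1 := ⟨(k - 1).toNat, by omega⟩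
      refine ⟨3 * j + 2, ?_⟩
      have h2 := tri_two (3 * j + 2)
      zify at h2 ⊢
      push_cast at *
      linarith

lemma tri_one (m : ℕ) : (∃ k : ℕ, k * (k + 1) / 2 = 3 * m + 1) ↔
    3 ∣ m ∧ ∃ k : ℕ, k * (k + 1) / 2 = m / 3 := by
  constructor
  · rintro ⟨k, h⟩
    have h2 := tri_two k
    rw [h] at h2
    obtain ⟨j, rfl | rfl | rfl⟩ : ∃ j, k = 3 * j ∨ k = 3 * j + 1 ∨ k = 3 * j + 2 :=
      ⟨k / 3, by omega⟩
    · exfalso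
      have h3 := congrArg (· % 3) h2
      simp [Nat.mul_mod, Nat.add_mod] at h3
    · have h3 := tri_two j
      have : m = 3 * (j * (j + 1) / 2) := by nlinarith
      exact ⟨⟨_, this⟩, j, by omega⟩
    · exfalso
      have h3 := congrArg (· % 3) h2
      simp [Nat.mul_mod, Nat.add_mod] at h3
  · rintro ⟨⟨l, rfl⟩, j, h⟩
    rw [Nat.mul_div_cancel_left _ (by norm_num)] at h
    subst h
    refine ⟨3 * j + 1, ?_⟩
    have h1 := tri_two j
    have h2 := tri_two (3 * j + 1)
    nlinarith

lemma psi_dissect :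
    psi = expand 3 three_ne_zero f + X * expand 3 three_ne_zero (expand 3 three_ne_zero psi) := by
  classical
  have cp (n : ℕ) : coeff n psi = if ∃ k : ℕ, k * (k + 1) / 2 = n then 1 else 0 := by
    rw [psi, coeff_mk]
  ext n
  rw [map_add]
  obtain ⟨m, rfl | rfl | rfl⟩ : ∃ m, n = 3 * m ∨ n = 3 * m + 1 ∨ n = 3 * m + 2 :=
      ⟨n / 3, by omega⟩
  · have : coeff (3 * m) (X * expand 3 three_ne_zero (expand 3 three_ne_zero psi)) = 0 := by
      rcases m with _ | m
      · simp
      · rw [show 3 * (m + 1) = 3 * m + 2 + 1 by ring, coeff_succ_X_mul,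
          coeff_expand_of_not_dvd _ _ _ (by omega)]
    rw [this, add_zero, coeff_expand_mul, coeff_f, cp]
    simp only [tri_zero]
  · rw [coeff_succ_X_mul, coeff_expand_of_not_dvd _ _ _ (by omega), zero_add, coeff_expand_mul,
      coeff_expand, cp, cp]
    simp only [tri_one]
    split_ifs <;> tauto
  · rw [coeff_succ_X_mul, coeff_expand_of_not_dvd _ _ _ (by omega),
      coeff_expand_of_not_dvd _ _ _ (by omega), cp]
    simp [tri_mod]

open scoped PowerSeries.WithPiTopology
open Filter Topology

lemma tri_mono {a b : ℕ} (h : a < b) : a * (a + 1) / 2 < b * (b + 1) / 2 := by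
  have := tri_two a
  have := tri_two b
  nlinarith

lemma tri_ge (a : ℕ) : a ≤ a * (a + 1) / 2 := by
  have := tri_two a
  rcases a with _ | a
  · simp
  · nlinarith

lemma coeff_psiN (d N : ℕ) (h : d ≤ N) :
    coeff d (∑ i ∈ range (2 * N + 1), (X : K⟦X⟧) ^ (i * (i + 1) / 2)) = coeff d psi := by
  classical
  rw [map_sum, psi, coeff_mk]
  simp only [coeff_X_pow]
  split_ifs with hk
  · obtain ⟨k, rfl⟩ := hk
    rw [Finset.sum_eq_single k]
    · simp
    · intro b _ hb
      rw [if_neg]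
      rcases lt_or_gt_of_ne hb with hb | hb
      · have := tri_mono hb; omega
      · have := tri_mono hb; omega
    · intro hk
      have := tri_ge k
      simp at hk
      omega
  · apply Finset.sum_eq_zero
    intro i _
    rw [if_neg]
    intro e
    exact hk ⟨i, e.symm⟩

lemma tendsto_prod : Tendsto (fun N => ∏ j ∈ range N, (1 - (X : K⟦X⟧) ^ (j + 1))) atTop (𝓝 f) :=
  (WithPiTopology.hasProd_one_sub_X_pow K).tendsto_prod_nat

lemma evenP_sq (N : ℕ) :
    evenP (X : K⟦X⟧) 0 N = (∏ j ∈ range N, (1 - (X : K⟦X⟧) ^ (j + 1))) ^ 2 := by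
  have : CharP K⟦X⟧ 2 := by
    exact charP_of_injective_algebraMap (R := K) (A := K⟦X⟧) (PowerSeries.C_injective) 2
  rw [evenP, ← prod_pow, Nat.Ico_zero_eq_range]
  apply prod_congr rfl
  intro j _
  rw [sub_pow_char, one_pow, ← pow_mul]
  ring

lemma rest_dvd (N : ℕ) : ∃ q : K⟦X⟧,
    ∑ s ∈ range (N + 1), evenP X s N * oddP X s * X ^ (s * (2 * N + 1)) =
      evenP X 0 N + X ^ (2 * N + 1) * q := by
  refine ⟨∑ s ∈ range N, evenP X (s + 1) N * oddP X (s + 1) * X ^ (s * (2 * N + 1)), ?_⟩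
  rw [sum_range_succ', mul_sum, add_comm]
  congr 1
  · simp [oddP]
  · apply sum_congr rfl
    intro s _
    ring

instance : IsTopologicalRing K⟦X⟧ := WithPiTopology.instIsTopologicalRing K
instance : T2Space K⟦X⟧ := WithPiTopology.instT2Space K

lemma psi_mul : psi * f = f ^ 2 * f ^ 2 := by
  have t1 : Tendsto (fun N : ℕ => ∑ i ∈ range (2 * N + 1), (X : K⟦X⟧) ^ (i * (i + 1) / 2))
      atTop (𝓝 psi) := by
    rw [WithPiTopology.tendsto_iff_coeff_tendsto]
    intro d
    exact tendsto_atTop_of_eventually_const (i₀ := d) fun N hN => coeff_psiN d N hN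
  have t2 : Tendsto (fun N : ℕ => ∏ j ∈ range (2 * N), (1 - (X : K⟦X⟧) ^ (j + 1))) atTop (𝓝 f) :=
    tendsto_prod.comp (tendsto_id.const_mul_atTop' (by norm_num))
  have t3 : Tendsto (fun N : ℕ => evenP (X : K⟦X⟧) 0 N) atTop (𝓝 (f ^ 2)) := by
    simp only [evenP_sq]
    exact tendsto_prod.pow 2
  choose q hq using rest_dvd
  have t4 : Tendsto (fun N : ℕ => (X : K⟦X⟧) ^ (2 * N + 1) * q N) atTop (𝓝 0) := by
    rw [WithPiTopology.tendsto_iff_coeff_tendsto]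
    intro d
    refine tendsto_atTop_of_eventually_const (i₀ := d) fun N hN => ?_
    rw [map_zero]
    exact X_pow_dvd_iff.1 (Dvd.intro _ rfl) d (by omega)
  have t5 := (t3.add t4).mul t3
  rw [add_zero] at t5
  refine tendsto_nhds_unique (t1.mul t2) (t5.congr fun N => ?_)
  rw [← hq, ← shanks, ← odd_mul_even]
  ring

lemma coeff_f_zero : coeff 0 f = 1 := by
  classical
  rw [coeff_f, if_pos ⟨0, by simp [pentagonal_def]⟩]

lemma f_ne : f ≠ 0 := by
  intro h
  have := coeff_f_zero
  rw [h] at this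
  simp at this

lemma psi_eq : psi = f ^ 3 := by
  apply mul_right_cancel₀ f_ne
  rw [psi_mul]
  ring

lemma continuous_expand (m : ℕ) (hm : m ≠ 0) :
    Continuous (fun g : K⟦X⟧ => expand m hm g) := by
  rw [continuous_iff_continuousAt]
  intro g
  rw [ContinuousAt, WithPiTopology.tendsto_iff_coeff_tendsto]
  intro d
  simp only [coeff_expand]
  split_ifs
  · exact (WithPiTopology.continuous_coeff K (d / m)).continuousAt
  · exact tendsto_const_nhds

lemma hasProd_mult (m : ℕ) (hm : m ≠ 0) :
    HasProd (fun i => if m ∣ i + 1 then 1 - (X : K⟦X⟧) ^ (i + 1) else 1) (expand m hm f) := by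
  have h := (WithPiTopology.hasProd_one_sub_X_pow K).map (expand m hm) (continuous_expand m hm)
  have hinj : Function.Injective (fun i : ℕ => (i + 1) * m - 1) := by
    intro a b h
    have h1 : 0 < (a + 1) * m := by positivity
    have h2 : 0 < (b + 1) * m := by positivity
    have h3 : (a + 1) * m = (b + 1) * m := by
      simp only at h
      omega
    have := Nat.eq_of_mul_eq_mul_right (Nat.pos_of_ne_zero hm) h3
    omega
  rw [← hinj.hasProd_iff]
  · convert h using 1
    ext1 i
    have h1 : 0 < (i + 1) * m := by positivity
    have h2 : (i + 1) * m - 1 + 1 = (i + 1) * m := by omega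
    simp only [Function.comp_apply, h2, map_sub, map_one, map_pow, expand_X]
    rw [if_pos (Dvd.intro_left _ rfl), ← pow_mul, mul_comm]
  · intro i hi
    rw [if_neg]
    rintro ⟨c, hc⟩
    apply hi
    rcases c with _ | c
    · omega
    · exact ⟨c, by simp only; rw [mul_comm, ← hc]; omega⟩

/-- restricted partition generating function -/
noncomputable def P (p : ℕ → Prop) [DecidablePred p] : K⟦X⟧ :=
  PowerSeries.mk fun n => (#(Nat.Partition.restricted n p) : K)

lemma hasProd_P (p : ℕ → Prop) [DecidablePred p] :
    HasProd (fun i ↦ if p (i + 1) then ∑' j : ℕ, (X : K⟦X⟧) ^ ((i + 1) * j) else 1) (P p) :=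
  Nat.Partition.hasProd_powerSeriesMk_card_restricted K p

lemma term_mul (i : ℕ) : (∑' j : ℕ, (X : K⟦X⟧) ^ ((i + 1) * j)) * (1 - X ^ (i + 1)) = 1 := by
  simp_rw [pow_mul]
  exact WithPiTopology.tsum_pow_mul_one_sub_of_constantCoeff_eq_zero (by simp)

lemma P_all : P (fun _ => True) * f = 1 := by
  have h := (hasProd_P (fun _ => True)).mul (WithPiTopology.hasProd_one_sub_X_pow K)
  refine h.unique ?_
  simp [term_mul, hasProd_one]

lemma P_three : P (fun j => ¬ 3 ∣ j) * f = expand 3 three_ne_zero f := by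
  have h := (hasProd_P (fun j => ¬ 3 ∣ j)).mul (WithPiTopology.hasProd_one_sub_X_pow K)
  refine h.unique ?_
  convert hasProd_mult 3 three_ne_zero using 1
  ext1 i
  by_cases h : 3 ∣ i + 1 <;> simp [h, term_mul]

lemma P_34 : P (fun j => ¬ 3 ∣ j ∧ ¬ 4 ∣ j) * (f * expand 12 (by norm_num) f) =
    expand 3 three_ne_zero f * expand 4 four_ne_zero f := by
  have h := (hasProd_P (fun j => ¬ 3 ∣ j ∧ ¬ 4 ∣ j)).mul
    ((WithPiTopology.hasProd_one_sub_X_pow K).mul (hasProd_mult 12 (by norm_num)))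
  refine h.unique ?_
  convert (hasProd_mult 3 three_ne_zero).mul (hasProd_mult 4 four_ne_zero) using 1
  ext1 i
  have h12 : 12 ∣ i + 1 ↔ 3 ∣ i + 1 ∧ 4 ∣ i + 1 := by omega
  by_cases h : 3 ∣ i + 1 <;> by_cases h' : 4 ∣ i + 1 <;> simp [h, h', h12, term_mul]

lemma expand_four (g : K⟦X⟧) : expand 4 four_ne_zero g = g ^ 4 := by
  have := expand_mul 2 two_ne_zero 2 two_ne_zero g
  rw [frob, frob, ← pow_mul] at this
  exact this

lemma expand_twelve (g : K⟦X⟧) :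
    expand 12 (by norm_num) g = (expand 3 three_ne_zero g) ^ 4 := by
  have := expand_mul 4 four_ne_zero 3 three_ne_zero g
  rw [expand_four] at this
  exact this

lemma P_main : P (fun j => ¬ 3 ∣ j ∧ ¬ 4 ∣ j) =
    expand 3 three_ne_zero (expand 2 two_ne_zero (P (fun _ => True))) +
      X * expand 3 three_ne_zero (P (fun j => ¬ 3 ∣ j) ^ 3) := by
  have hf3 : expand 3 three_ne_zero f ≠ 0 := by
    intro h
    have h5 := coeff_expand_mul 3 three_ne_zero f 0
    rw [h, coeff_f_zero] at h5
    simp at h5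
  have h := P_34
  rw [expand_twelve, expand_four] at h
  have h1 : P (fun j => ¬ 3 ∣ j ∧ ¬ 4 ∣ j) * (expand 3 three_ne_zero f) ^ 3 = f ^ 3 := by
    apply mul_right_cancel₀ (mul_ne_zero f_ne hf3)
    linear_combination h
  apply mul_right_cancel₀ (pow_ne_zero 3 hf3)
  have h3 : expand 3 three_ne_zero (P (fun _ => True)) * expand 3 three_ne_zero f = 1 := by
    rw [← map_mul, P_all, map_one]
  have h4 := psi_dissect
  rw [psi_eq] at h4
  rw [h1, h4, frob, add_mul]
  congr 1
  · rw [map_pow]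
    linear_combination (-(expand 3 three_ne_zero f *
      (expand 3 three_ne_zero (P (fun _ => True)) * expand 3 three_ne_zero f + 1))) * h3
  · rw [mul_assoc, ← map_pow, ← map_mul, ← mul_pow, P_three, map_pow]

end S4

theorem stmt_4 (n : ℕ) :
    coloredRegular 2 3 4 (6 * n + 4) ≡ 0 [MOD 2] ∧
    coloredRegular 2 3 4 (6 * n + 2) ≡ coloredLRegular 3 3 n [MOD 2] ∧
    coloredRegular 2 3 4 (12 * n + 6) ≡ 0 [MOD 2] ∧
    coloredRegular 2 3 4 (12 * n) ≡ Fintype.card (Nat.Partition n) [MOD 2] := by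
  open PowerSeries S4 in
  have hA (m : ℕ) : (coloredRegular 2 3 4 (2 * m) : ZMod 2) =
      coeff m (P (fun j => ¬ 3 ∣ j ∧ ¬ 4 ∣ j)) := by
    have h := congrArg (coeff (2 * m)) (genfun_col (ZMod 2) (fun j => ¬ 3 ∣ j ∧ ¬ 4 ∣ j) (by simp) 2)
    rw [← P, ← frob, coeff_expand_mul, coeff_mk] at h
    rw [← h]
    simp only [coloredRegular, Col, and_assoc]
  open PowerSeries S4 in
  have hB (m : ℕ) : (coloredLRegular 3 3 m : ZMod 2) = coeff m (P (fun j => ¬ 3 ∣ j) ^ 3) := by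
    have h := congrArg (coeff m) (genfun_col (ZMod 2) (fun j => ¬ 3 ∣ j) (by simp) 3)
    rw [← P, coeff_mk] at h
    rw [← h]
    rfl
  open PowerSeries S4 in
  have hC (m : ℕ) : (Fintype.card (Nat.Partition m) : ZMod 2) = coeff m (P (fun _ => True)) := by
    simp [P, Nat.Partition.restricted]
  open PowerSeries S4 in
  have h0 (m : ℕ) : coeff (3 * m) (P (fun j => ¬ 3 ∣ j ∧ ¬ 4 ∣ j)) =
      coeff m (expand 2 two_ne_zero (P (fun _ => True))) := by
    rw [P_main, map_add, coeff_expand_mul, add_eq_left]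
    rcases m with _ | m
    · simp
    · rw [show 3 * (m + 1) = 3 * m + 2 + 1 by ring, coeff_succ_X_mul,
        PowerSeries.coeff_expand_of_not_dvd _ _ _ (by omega)]
  open PowerSeries S4 in
  simp only [← ZMod.natCast_eq_natCast_iff, Nat.cast_zero]
  refine ⟨?_, ?_, ?_, ?_⟩
  · rw [show 6 * n + 4 = 2 * (3 * n + 1 + 1) by ring, hA, S4.P_main, map_add,
      PowerSeries.coeff_succ_X_mul, PowerSeries.coeff_expand_of_not_dvd _ _ _ (by omega),
      PowerSeries.coeff_expand_of_not_dvd _ _ _ (by omega), add_zero]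
  · rw [show 6 * n + 2 = 2 * (3 * n + 1) by ring, hA, S4.P_main, map_add,
      PowerSeries.coeff_succ_X_mul, PowerSeries.coeff_expand_of_not_dvd _ _ _ (by omega),
      PowerSeries.coeff_expand_mul, zero_add, hB]
  · rw [show 12 * n + 6 = 2 * (3 * (2 * n + 1)) by ring, hA, h0,
      PowerSeries.coeff_expand_of_not_dvd _ _ _ (by omega)]
  · rw [show 12 * n = 2 * (3 * (2 * n)) by ring, hA, h0, PowerSeries.coeff_expand_mul, hC]
end

section
/- Let t be a positive integer with 3 ∤ t. Then for every nonnegative integer n, b^4_{3,4t}(16n+15) ≡ 0 (mod 8) and b^4_{3,4t}(16n+11) ≡ 0 (mod 8). -/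
open PowerSeries Finset

noncomputable def geo (R : Type*) [CommRing R] (j : ℕ) : R⟦X⟧ :=
  PowerSeries.mk fun k => if j ∣ k then 1 else 0

lemma geo_mul {R : Type*} [CommRing R] {j : ℕ} (hj : 0 < j) :
    geo R j * (1 - X ^ j) = 1 := by
  ext k
  rw [mul_sub, mul_one, map_sub, coeff_mul_X_pow', coeff_one]
  simp only [geo, coeff_mk]
  by_cases hk : k = 0
  · subst hk
    simp [hj.ne']
  · rw [if_neg hk]
    by_cases h : j ≤ k
    · have : j ∣ k - j ↔ j ∣ k := Nat.dvd_sub_iff_left h dvd_rfl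
      simp [h, this]
    · rw [if_neg h, if_neg (fun hd => h (Nat.le_of_dvd (by omega) hd)), sub_zero]

lemma map_geo {R S : Type*} [CommRing R] [CommRing S] (f : R →+* S) (j : ℕ) :
    PowerSeries.map f (geo R j) = geo S j := by
  ext k
  simp only [geo, coeff_map, coeff_mk]
  split_ifs <;> simp

def Sup {R : Type*} [CommRing R] (m : ℕ) (f : R⟦X⟧) : Prop := ∀ k, ¬ m ∣ k → coeff k f = 0

lemma Sup.coeff_mul_eq_zero {R : Type*} [CommRing R] {m : ℕ} {f g : R⟦X⟧} (hf : Sup m f) {n : ℕ}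
    (hg : ∀ b ≤ n, b % m = n % m → coeff b g = 0) : coeff n (f * g) = 0 := by
  rw [coeff_mul]
  refine Finset.sum_eq_zero fun p hp => ?_
  rw [HasAntidiagonal.mem_antidiagonal] at hp
  by_cases h : m ∣ p.1
  · rw [hg p.2 (by omega), mul_zero]
    obtain ⟨c, hc⟩ := h
    rw [← hp, hc, Nat.mul_add_mod]
  · rw [hf _ h, zero_mul]

lemma Sup.mul {R : Type*} [CommRing R] {m : ℕ} {f g : R⟦X⟧} (hf : Sup m f) (hg : Sup m g) :
    Sup m (f * g) := fun k hk => hf.coeff_mul_eq_zero fun b _ hb => hg b (by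
      intro h
      exact hk (Nat.dvd_of_mod_eq_zero (hb ▸ Nat.mod_eq_zero_of_dvd h)))

lemma Sup.one {R : Type*} [CommRing R] (m : ℕ) : Sup m (1 : R⟦X⟧) := by
  intro k hk
  rw [coeff_one, if_neg]
  rintro rfl
  simp at hk

lemma Sup.pow {R : Type*} [CommRing R] {m : ℕ} {f : R⟦X⟧} (hf : Sup m f) (n : ℕ) :
    Sup m (f ^ n) := by
  induction n with
  | zero => simpa using Sup.one m
  | succ n ih => rw [pow_succ]; exact ih.mul hf

lemma Sup.prod {R ι : Type*} [CommRing R] {m : ℕ} {f : ι → R⟦X⟧} (s : Finset ι)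
    (hf : ∀ i ∈ s, Sup m (f i)) : Sup m (∏ i ∈ s, f i) := by
  classical
  induction s using Finset.induction_on with
  | empty => simpa using Sup.one m
  | insert a s ha ih =>
    rw [prod_insert ha]
    exact (hf a (by simp)).mul (ih fun i hi => hf i (by simp [hi]))

lemma Sup.geo {R : Type*} [CommRing R] {m j : ℕ} (h : m ∣ j) : Sup m (geo R j) := by
  intro k hk
  simp only [_root_.geo, coeff_mk]
  rw [if_neg fun h' => hk (h.trans h')]

lemma Sup.sub {R : Type*} [CommRing R] {m j : ℕ} (h : m ∣ j) : Sup m (1 - X ^ j : R⟦X⟧) := by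
  intro k hk
  rw [map_sub, Sup.one m k hk, coeff_X_pow, if_neg, sub_zero]
  rintro rfl; exact hk h

lemma shanks {R : Type*} [CommRing R] (q : R) (g : ℕ → R) (hg : ∀ k, g k * (1 - q ^ (2 * k + 1)) = 1)
    (n : ℕ) :
    ∑ s ∈ range n, (∏ k ∈ Ico s n, (1 - q ^ (2 * k + 2)) * g k) * q ^ (s * (2 * n + 1)) =
      ∑ i ∈ range (2 * n), q ^ (i * (i + 1) / 2) := by
  induction n with
  | zero => simp
  | succ n ih =>
    rw [show 2 * (n + 1) = 2 * n + 1 + 1 by ring, sum_range_succ _ (2 * n + 1),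
      sum_range_succ _ (2 * n), ← ih, sum_range_succ]
    have e1 : 2 * n * (2 * n + 1) / 2 = n * (2 * n + 1) := by
      rw [mul_assoc, Nat.mul_div_cancel_left _ (by norm_num)]
    have e2 : (2 * n + 1) * (2 * n + 1 + 1) / 2 = n * (2 * n + 1) + (2 * n + 1) := by
      rw [show (2 * n + 1) * (2 * n + 1 + 1) = 2 * (n * (2 * n + 1) + (2 * n + 1)) by ring,
        Nat.mul_div_cancel_left _ (by norm_num)]
    rw [e1, e2]
    let Z : ℕ → R := fun s => (∏ k ∈ Ico s n, (1 - q ^ (2 * k + 2)) * g k) * (1 - q ^ (2 * s)) *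
      q ^ (s * (2 * n + 1)) * g n
    have key : ∀ s ∈ range n, (∏ k ∈ Ico s (n + 1), (1 - q ^ (2 * k + 2)) * g k) *
        q ^ (s * (2 * n + 1 + 1 + 1)) = (∏ k ∈ Ico s n, (1 - q ^ (2 * k + 2)) * g k) *
        q ^ (s * (2 * n + 1)) + (Z (s + 1) - Z s) := by
      intro s hs
      rw [mem_range] at hs
      rw [prod_Ico_succ_top hs.le]
      simp only [Z]
      rw [prod_eq_prod_Ico_succ_bot hs]
      generalize (∏ k ∈ Ico (s + 1) n, (1 - q ^ (2 * k + 2)) * g k) = W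
      have h1 := hg s
      have h2 := hg n
      rw [show s * (2 * n + 1 + 1 + 1) = s * (2 * n + 1) + 2 * s by ring,
        show (s + 1) * (2 * n + 1) = s * (2 * n + 1) + (2 * n + 1) by ring,
        pow_add q (s * (2 * n + 1)) (2 * s), pow_add q (s * (2 * n + 1)) (2 * n + 1)]
      rw [show 2 * (s + 1) = 2 * s + 2 by ring]
      generalize q ^ (s * (2 * n + 1)) = Q
      have p1 : q ^ (2 * s + 1) = q ^ (2 * s) * q := pow_succ _ _
      have p2 : q ^ (2 * s + 2) = q ^ (2 * s) * q ^ 2 := pow_add _ _ _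
      have p3 : q ^ (2 * n + 2) = q ^ (2 * n) * q ^ 2 := pow_add _ _ _
      have p4 : q ^ (2 * n + 1) = q ^ (2 * n) * q := pow_succ _ _
      rw [p1] at h1
      rw [p4] at h2
      rw [p2, p3, p4]
      generalize q ^ (2 * s) = a at *
      generalize q ^ (2 * n) = b at *
      linear_combination (W * (1 - a * q ^ 2) * Q * g s) * h2 +
        (g n * W * (1 - a * q ^ 2) * Q * b * q ) * h1
    rw [sum_congr rfl key, sum_add_distrib, sum_range_sub]
    simp only [Z]
    simp only [Ico_self, prod_empty, mul_zero, pow_zero, sub_self, zero_mul, Nat.Ico_succ_singleton,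
      prod_singleton]
    have h2 := hg n
    rw [show n * (2 * n + 1 + 1 + 1) = n * (2 * n + 1) + 2 * n by ring,
      pow_add q (n * (2 * n + 1)) (2 * n), pow_add q (n * (2 * n + 1)) (2 * n + 1)]
    generalize ∑ x ∈ range n, (∏ k ∈ Ico x n, (1 - q ^ (2 * k + 2)) * g k) * q ^ (x * (2 * n + 1)) = T
    generalize q ^ (n * (2 * n + 1)) = Q
    have p3 : q ^ (2 * n + 2) = q ^ (2 * n) * q ^ 2 := pow_add _ _ _
    have p4 : q ^ (2 * n + 1) = q ^ (2 * n) * q := pow_succ _ _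
    rw [p4] at h2
    rw [p3, p4]
    generalize q ^ (2 * n) = b at *
    linear_combination (Q * (1 + b * q)) * h2

lemma shanks_dvd {R : Type*} [CommRing R] (q : R) (g : ℕ → R)
    (hg : ∀ k, g k * (1 - q ^ (2 * k + 1)) = 1) (n : ℕ) (hn : 0 < n) :
    q ^ (2 * n + 1) ∣ ∑ i ∈ range (2 * n), q ^ (i * (i + 1) / 2) -
      ∏ k ∈ range n, (1 - q ^ (2 * k + 2)) * g k := by
  rw [← shanks q g hg]
  obtain ⟨m, rfl⟩ : ∃ m, n = m + 1 := ⟨n - 1, by omega⟩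
  rw [sum_range_succ', ← range_eq_Ico]
  simp only [zero_mul, pow_zero, mul_one, add_sub_cancel_right]
  refine Finset.dvd_sum fun s _ => Dvd.dvd.mul_left (pow_dvd_pow _ ?_) _
  nlinarith

lemma P_mul {R : Type*} [CommRing R] [CharP R 2] (q : R) (g : ℕ → R)
    (hg : ∀ k, g k * (1 - q ^ (2 * k + 1)) = 1) (n : ℕ) :
    (∏ k ∈ range n, (1 - q ^ (2 * k + 2)) * g k) * ∏ k ∈ range (2 * n), (1 - q ^ (k + 1)) =
      (∏ k ∈ range n, (1 - q ^ (k + 1))) ^ 4 := by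
  induction n with
  | zero => simp
  | succ n ih =>
    rw [show 2 * (n + 1) = 2 * n + 1 + 1 by ring, prod_range_succ, prod_range_succ _ (2 * n + 1),
      prod_range_succ _ (2 * n), prod_range_succ _ n, mul_pow, ← ih]
    have h1 : (1 - q ^ (n + 1)) ^ 4 = (1 - q ^ (2 * n + 2)) ^ 2 := by
      rw [show 4 = 2 * 2 by norm_num, pow_mul, sub_pow_char, one_pow, ← pow_mul,
        show (n + 1) * 2 = 2 * n + 2 by ring]
    rw [h1]
    have h2 := hg n
    rw [show 2 * n + 1 + 1 = 2 * n + 2 by ring]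
    generalize (∏ k ∈ range n, (1 - q ^ (2 * k + 2)) * g k) = A
    generalize ∏ k ∈ range (2 * n), (1 - q ^ (k + 1)) = B
    linear_combination (A * B * (1 - q ^ (2 * n + 2)) ^ 2) * h2

lemma pow4_eq (f : (ZMod 2)⟦X⟧) : f ^ 4 = PowerSeries.expand 4 (by norm_num) f := by
  have h := MvPowerSeries.map_iterateFrobenius_expand (R := ZMod 2) 2 (by norm_num) f 2
  have e : iterateFrobenius (ZMod 2) 2 2 = RingHom.id _ := by
    ext x
    rw [iterateFrobenius_def]
    revert x
    decide
  rw [e] at h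
  rw [MvPowerSeries.map_id] at h
  exact h.symm

lemma coeff_pow4 (f : (ZMod 2)⟦X⟧) (r : ℕ) : coeff (4 * r) (f ^ 4) = coeff r f := by
  rw [pow4_eq, PowerSeries.coeff_expand_mul]

lemma sup_pow4 (f : (ZMod 2)⟦X⟧) : Sup 4 (f ^ 4) := by
  intro k hk
  rw [pow4_eq, PowerSeries.coeff_expand_of_not_dvd _ _ _ hk]

lemma div_par (M : ℕ) (hM : 0 < M) :
    (∑ _j ∈ M.divisors, (1 : ZMod 2)) = if IsSquare M then 1 else 0 := by
  have h2 : (1 : ZMod 2) + 1 = 0 := by decide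
  have inv : ∀ s : Finset ℕ, (∀ j, j ∈ s ↔ j ∣ M ∧ j * j ≠ M) → (∑ _j ∈ s, (1 : ZMod 2)) = 0 := by
    intro s hs
    refine Finset.sum_involution (fun j _ => M / j) (fun _ _ => h2) ?_ ?_ ?_
    · intro j hj _ h
      obtain ⟨h1, h2⟩ := (hs j).1 hj
      have := Nat.div_mul_cancel h1
      rw [h] at this
      exact h2 this
    · intro j hj
      obtain ⟨h1, h2⟩ := (hs j).1 hj
      refine (hs _).2 ⟨Nat.div_dvd_of_dvd h1, fun h => h2 ?_⟩
      have h3 := Nat.div_mul_cancel h1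
      have h4 : 0 < M / j := Nat.div_pos (Nat.le_of_dvd hM h1) (Nat.pos_of_dvd_of_pos h1 hM)
      have : M / j = j := by
        apply Nat.eq_of_mul_eq_mul_left h4
        rw [h, h3]
      rw [this] at h
      exact h
    · intro j hj
      exact Nat.div_div_self ((hs j).1 hj).1 hM.ne'
  split_ifs with h
  · obtain ⟨c, hc⟩ := h
    have hcm : c ∈ M.divisors := by simp [hc]; rintro rfl; simp at hc; omega
    rw [← Finset.add_sum_erase _ _ hcm, inv, add_zero]
    intro j
    rw [mem_erase, Nat.mem_divisors]
    constructor
    · rintro ⟨a, b, _⟩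
      exact ⟨b, fun h => a (Nat.mul_self_inj.1 (h.trans hc))⟩
    · rintro ⟨a, b⟩
      exact ⟨fun h => b (by rw [h, hc]), a, hM.ne'⟩
  · apply inv
    intro j
    rw [Nat.mem_divisors]
    exact ⟨fun a => ⟨a.1, fun h' => h ⟨j, h'.symm⟩⟩, fun a => ⟨a.1, hM.ne'⟩⟩

open Classical in
lemma div_par3 (N : ℕ) (hN : N % 4 = 3) :
    (∑ _j ∈ N.divisors with ¬ 3 ∣ _j, (1 : ZMod 2)) =
      if ∃ i, N = 3 * (2 * i + 1) ^ 2 then 1 else 0 := by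
  obtain ⟨a, M, hM, rfl⟩ := Nat.exists_eq_pow_mul_and_not_dvd (n := N) (by omega) 3 (by norm_num)
  have hM0 : 0 < M := by
    rcases Nat.eq_zero_or_pos M with h | h
    · subst h; simp at hM
    · exact h
  have e : (3 ^ a * M).divisors.filter (fun j => ¬ 3 ∣ j) = M.divisors := by
    ext j
    simp only [mem_filter, Nat.mem_divisors]
    constructor
    · rintro ⟨⟨h1, _⟩, h2⟩
      refine ⟨Nat.Coprime.dvd_of_dvd_mul_left ?_ h1, hM0.ne'⟩
      exact (Nat.Coprime.pow_left a ((Nat.Prime.coprime_iff_not_dvd Nat.prime_three).2 h2)).symm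
    · rintro ⟨h1, _⟩
      exact ⟨⟨h1.mul_left _, by positivity⟩, fun h => hM (h.trans h1)⟩
  rw [e, div_par M hM0]
  suffices h : IsSquare M ↔ ∃ i, 3 ^ a * M = 3 * (2 * i + 1) ^ 2 by
    split_ifs <;> tauto
  have modlem : ∀ b, 3 ^ (2 * b) % 4 = 1 := by
    intro b; rw [pow_mul, Nat.pow_mod]; norm_num
  constructor
  · rintro ⟨c, rfl⟩
    have hc : c % 4 = 0 ∨ c % 4 = 1 ∨ c % 4 = 2 ∨ c % 4 = 3 := by omega
    rcases Nat.even_or_odd' a with ⟨b, rfl | rfl⟩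
    · exfalso
      rw [Nat.mul_mod, modlem, Nat.mul_mod c c] at hN
      rcases hc with h | h | h | h <;> rw [h] at hN <;> omega
    · rcases Nat.even_or_odd' (3 ^ b * c) with ⟨i, hi | hi⟩
      · exfalso
        have : 3 ^ (2 * b + 1) * (c * c) = 4 * (3 * i * i) := by
          calc _ = 3 * (3 ^ b * c) ^ 2 := by ring
            _ = _ := by rw [hi]; ring
        omega
      · exact ⟨i, by rw [← hi]; ring⟩
  · rintro ⟨i, hi⟩
    have hd : (2 * i + 1) ≠ 0 := by omega
    obtain ⟨b, c, hc, hbc⟩ := Nat.exists_eq_pow_mul_and_not_dvd hd 3 (by norm_num)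
    rw [hbc] at hi
    have hi' : 3 ^ a * M = 3 ^ (2 * b + 1) * (c * c) := by rw [hi]; ring
    have hcc : ¬ 3 ∣ c * c := fun h => hc ((Nat.Prime.dvd_mul Nat.prime_three).1 h |>.elim id id)
    have hab : a = 2 * b + 1 := by
      have p3 := Nat.prime_three
      rcases lt_trichotomy a (2 * b + 1) with h | h | h
      · exfalso
        obtain ⟨d, hd⟩ := Nat.exists_eq_add_of_lt h
        rw [hd, show a + d + 1 = a + (d + 1) by ring, pow_add, mul_assoc] at hi'
        have := Nat.eq_of_mul_eq_mul_left (by positivity) hi'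
        exact hM (this ▸ (Dvd.dvd.mul_right (dvd_pow_self 3 (by omega)) _))
      · exact h
      · exfalso
        obtain ⟨d, hd⟩ := Nat.exists_eq_add_of_lt h
        rw [hd, show 2 * b + 1 + d + 1 = 2 * b + 1 + (d + 1) by ring, pow_add (3:ℕ) (2 * b + 1) (d + 1), mul_assoc] at hi'
        have := Nat.eq_of_mul_eq_mul_left (by positivity) hi'
        exact hcc (this ▸ (Dvd.dvd.mul_right (dvd_pow_self 3 (by omega)) _))
    rw [hab] at hi'
    exact ⟨c, Nat.eq_of_mul_eq_mul_left (by positivity) hi'⟩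

def ivl (p : ℕ × ℕ) : ℕ × ℕ :=
  if p.1 % 2 = p.2 % 2 then
    (if 3 * p.2 < p.1 then (p.1 - 3 * p.2 - 2) / 2 else (3 * p.2 - p.1) / 2, (p.1 + p.2) / 2)
  else ((p.1 + 3 * p.2 + 1) / 2, if p.2 < p.1 then (p.1 - p.2 - 1) / 2 else (p.2 - p.1 - 1) / 2)

lemma ivl_ivl (p : ℕ × ℕ) : ivl (ivl p) = p := by
  obtain ⟨i, j⟩ := p
  simp only [ivl]
  by_cases h1 : i % 2 = j % 2
  · by_cases h2 : 3 * j < i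
    · simp only [h1, h2, if_true]
      rw [if_neg (by omega)]
      simp only [Prod.mk.injEq]
      split_ifs <;> omega
    · simp only [h1, h2, if_true, if_false]
      rw [if_pos (by omega)]
      simp only [Prod.mk.injEq]
      split_ifs <;> omega
  · by_cases h2 : j < i
    · simp only [h1, h2, if_true, if_false]
      rw [if_neg (by omega)]
      simp only [Prod.mk.injEq]
      split_ifs <;> omega
    · simp only [h1, h2, if_false]
      obtain ⟨c, rfl⟩ : ∃ c, j = i + 2 * c + 1 := ⟨(j - i - 1) / 2, by omega⟩
      rw [show (i + 2 * c + 1 - i - 1) / 2 = c by omega,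
        show (i + 3 * (i + 2 * c + 1) + 1) / 2 = 2 * i + 3 * c + 2 by omega]
      rw [if_pos (by omega)]
      simp only [Prod.mk.injEq]
      split_ifs <;> omega

def qf (p : ℕ × ℕ) : ℕ := p.1 * (p.1 + 1) + 3 * (p.2 * (p.2 + 1))

lemma qf_ivl (p : ℕ × ℕ) : qf (ivl p) = qf p := by
  obtain ⟨i, j⟩ := p
  simp only [ivl, qf]
  by_cases h1 : i % 2 = j % 2
  · by_cases h2 : 3 * j < i
    · simp only [h1, h2, if_true]
      obtain ⟨c, rfl⟩ : ∃ c, i = 3 * j + 2 * c + 2 := ⟨(i - 3 * j - 2) / 2, by omega⟩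
      rw [show (3 * j + 2 * c + 2 - 3 * j - 2) / 2 = c by omega,
        show (3 * j + 2 * c + 2 + j) / 2 = 2 * j + c + 1 by omega]
      ring
    · simp only [h1, h2, if_true, if_false]
      obtain ⟨c, hc⟩ : ∃ c, 3 * j = i + 2 * c := ⟨(3 * j - i) / 2, by omega⟩
      obtain ⟨d, hd⟩ : ∃ d, i + j = 2 * d := ⟨(i + j) / 2, by omega⟩
      rw [show (3 * j - i) / 2 = c by omega, show (i + j) / 2 = d by omega]
      obtain rfl : c = 2 * j - d := by omega
      obtain rfl : i = 2 * d - j := by omega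
      zify [show d ≤ 2 * j by omega, show j ≤ 2 * d by omega]
      ring
  · by_cases h2 : j < i
    · simp only [h1, h2, if_true, if_false]
      obtain ⟨c, rfl⟩ : ∃ c, i = j + 2 * c + 1 := ⟨(i - j - 1) / 2, by omega⟩
      rw [show (j + 2 * c + 1 - j - 1) / 2 = c by omega,
        show (j + 2 * c + 1 + 3 * j + 1) / 2 = 2 * j + c + 1 by omega]
      ring
    · simp only [h1, h2, if_false]
      obtain ⟨c, rfl⟩ : ∃ c, j = i + 2 * c + 1 := ⟨(j - i - 1) / 2, by omega⟩
      rw [show (i + 2 * c + 1 - i - 1) / 2 = c by omega,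
        show (i + 3 * (i + 2 * c + 1) + 1) / 2 = 2 * i + 3 * c + 2 by omega]
      ring

lemma even_tri (i : ℕ) : 2 * (i * (i + 1) / 2) = i * (i + 1) :=
  Nat.mul_div_cancel' (Nat.even_mul_succ_self i).two_dvd

lemma ivl_fix (p : ℕ × ℕ) (h : ivl p = p) (r : ℕ) (hr : qf p = 2 * r) : r % 4 = 0 ∨ r % 4 = 1 := by
  obtain ⟨i, j⟩ := p
  simp only [ivl] at h
  simp only [qf] at hr
  have he : i = j ∨ i = 3 * j + 1 := by
    split_ifs at h <;> simp only [Prod.mk.injEq] at h <;> omega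
  rcases he with rfl | rfl
  · left
    have := even_tri i
    omega
  · right
    have := even_tri j
    have e : (3 * j + 1) * (3 * j + 1 + 1) = 9 * (j * (j + 1)) + 2 := by ring
    omega

lemma psi_coeff_s6 (a b r : ℕ) (ha : r < a) (hb : r < b) (hr : r % 4 = 2 ∨ r % 4 = 3) :
    coeff r ((∑ i ∈ range a, (X : (ZMod 2)⟦X⟧) ^ (i * (i + 1) / 2)) *
      ∑ j ∈ range b, ((X : (ZMod 2)⟦X⟧) ^ 3) ^ (j * (j + 1) / 2)) = 0 := by
  rw [sum_mul_sum, ← sum_product', map_sum]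
  have e : ∀ p : ℕ × ℕ, coeff r ((X : (ZMod 2)⟦X⟧) ^ (p.1 * (p.1 + 1) / 2) *
      ((X : (ZMod 2)⟦X⟧) ^ 3) ^ (p.2 * (p.2 + 1) / 2)) = if qf p = 2 * r then 1 else 0 := by
    intro p
    rw [← pow_mul, ← pow_add, coeff_X_pow]
    have h1 := even_tri p.1
    have h2 := even_tri p.2
    simp only [qf]
    congr 1
    apply propext
    constructor <;> intro h <;> omega
  simp only [e]
  have h2 : (1 : ZMod 2) + 1 = 0 := by decide
  rw [← sum_filter]
  refine Finset.sum_involution (fun p _ => ivl p) (fun _ _ => h2) ?_ ?_ (fun p _ => ivl_ivl p)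
  · intro p hp _ h
    have := ivl_fix p h r (mem_filter.1 hp).2
    omega
  · intro p hp
    have hq : qf (ivl p) = 2 * r := (qf_ivl p).trans (mem_filter.1 hp).2
    rw [mem_filter, mem_product, mem_range, mem_range]
    refine ⟨?_, hq⟩
    simp only [qf] at hq
    constructor
    · by_contra h
      nlinarith [Nat.zero_le ((ivl p).2 * ((ivl p).2 + 1)), mul_nonneg (Nat.zero_le (ivl p).1) (Nat.zero_le (ivl p).1), even_tri (ivl p).1, Nat.mul_self_le_mul_self (not_lt.1 h)]
    · by_contra h
      nlinarith [Nat.zero_le ((ivl p).1 * ((ivl p).1 + 1)), even_tri (ivl p).2, Nat.mul_self_le_mul_self (not_lt.1 h)]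

lemma card_gen {ι : Type*} [DecidableEq ι] (T : Finset ι) (w : ι → ℕ) (hw : ∀ a ∈ T, 0 < w a) (n : ℕ) :
    ((Nat.card {M : Multiset ι // (∀ x ∈ M, x ∈ T) ∧ (M.map w).sum = n} : ℕ) : ℤ) =
      coeff n (∏ a ∈ T, geo ℤ (w a)) := by
  rw [PowerSeries.coeff_prod]
  simp only [geo, coeff_mk]
  have e : ∀ l ∈ T.finsuppAntidiag n, (∏ i ∈ T, if w i ∣ l i then (1 : ℤ) else 0) =
      if ∀ i ∈ T, w i ∣ l i then 1 else 0 := by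
    intro l _
    split_ifs with h
    · exact prod_eq_one fun i hi => if_pos (h i hi)
    · push Not at h
      obtain ⟨i, hi, h⟩ := h
      exact prod_eq_zero hi (if_neg h)
  rw [sum_congr rfl e, ← sum_filter, sum_const, nsmul_eq_mul, mul_one]
  norm_cast
  rw [← Fintype.card_coe, ← Nat.card_eq_fintype_card]
  have hsum : ∀ M : Multiset ι, (∀ x ∈ M, x ∈ T) →
      (M.map w).sum = ∑ a ∈ T, w a * M.count a := by
    intro M hM
    rw [Finset.sum_multiset_map_count]
    simp only [smul_eq_mul]
    rw [Finset.sum_subset (s₂ := T)]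
    · exact sum_congr rfl fun a _ => mul_comm _ _
    · intro a ha
      exact hM a (Multiset.mem_toFinset.1 ha)
    · intro a _ ha
      rw [Multiset.mem_toFinset] at ha
      rw [Multiset.count_eq_zero_of_notMem ha, zero_mul]
  have hT : ∀ M : Multiset ι, (∀ x ∈ M, x ∈ T) → ∀ a, w a * M.count a ≠ 0 → a ∈ T := by
    intro M hM a ha
    by_contra h
    apply ha
    rw [Multiset.count_eq_zero_of_notMem (fun h' => h (hM a h')), mul_zero]
  refine Nat.card_eq_of_bijective (fun M => ⟨Finsupp.onFinset T (fun a => w a * M.1.count a)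
    (hT M.1 M.2.1), ?_⟩) ⟨?_, ?_⟩
  · rw [mem_filter, mem_finsuppAntidiag]
    refine ⟨⟨?_, Finsupp.support_onFinset_subset⟩, fun i _ => ?_⟩
    · exact (hsum M.1 M.2.1).symm.trans M.2.2
    · simp
  · rintro ⟨M, hM, h1⟩ ⟨M', hM', h2⟩ h
    simp only [Subtype.mk.injEq] at h ⊢
    ext a
    by_cases ha : a ∈ T
    · have := DFunLike.congr_fun h a
      simp only [Finsupp.onFinset_apply] at this
      exact Nat.eq_of_mul_eq_mul_left (hw a ha) this
    · rw [Multiset.count_eq_zero_of_notMem (fun h' => ha (hM a h')),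
        Multiset.count_eq_zero_of_notMem (fun h' => ha (hM' a h'))]
  · rintro ⟨l, hl⟩
    have hl' := hl
    rw [mem_filter, mem_finsuppAntidiag] at hl'
    obtain ⟨⟨h1, h2⟩, h3⟩ := hl'
    let M : Multiset ι := Finsupp.toMultiset (Finsupp.onFinset T (fun a => l a / w a) (by
      intro a ha
      by_contra h
      apply ha
      have : l a = 0 := by
        by_contra h'
        exact h (h2 (Finsupp.mem_support_iff.2 h'))
      rw [this, Nat.zero_div]))
    have hc : ∀ a, M.count a = l a / w a := by
      intro a
      simp only [M, Finsupp.count_toMultiset, Finsupp.onFinset_apply]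
    have hMT : ∀ x ∈ M, x ∈ T := by
      intro x hx
      by_contra h
      have h0 : l x = 0 := by
        by_contra h'
        exact h (h2 (Finsupp.mem_support_iff.2 h'))
      have := hc x
      rw [h0, Nat.zero_div, Multiset.count_eq_zero] at this
      exact this hx
    have hmul : ∀ a, w a * M.count a = l a := by
      intro a
      rw [hc]
      by_cases ha : a ∈ T
      · exact Nat.mul_div_cancel' (h3 a ha)
      · have h0 : l a = 0 := by
          by_contra h'
          exact ha (h2 (Finsupp.mem_support_iff.2 h'))
        rw [h0, Nat.zero_div, mul_zero]
    refine ⟨⟨M, hMT, ?_⟩, ?_⟩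
    · rw [hsum M hMT, ← h1]
      exact sum_congr rfl fun a _ => hmul a
    · simp only [Subtype.mk.injEq]
      ext a
      simp only [Finsupp.onFinset_apply, hmul]

def DD (n : ℕ) : Finset ℕ := (range (6 * n + 1)).filter fun j => ¬ 3 ∣ j

lemma DD_pos {n j : ℕ} (h : j ∈ DD n) : 0 < j := by
  rcases Nat.eq_zero_or_pos j with rfl | h'
  · simp [DD] at h
  · exact h'

lemma prod_split {R : Type*} [CommRing R] (M : ℕ) :
    (∏ j ∈ (range (3 * M + 1)).filter (fun j => ¬ 3 ∣ j), (1 - X ^ j : R⟦X⟧)) *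
      ∏ k ∈ range M, (1 - (X ^ 3) ^ (k + 1)) = ∏ k ∈ range (3 * M), (1 - X ^ (k + 1)) := by
  induction M with
  | zero => simp [Finset.prod_filter]
  | succ M ih =>
    rw [show 3 * (M + 1) = 3 * M + 1 + 1 + 1 by ring, prod_range_succ _ (3 * M + 1 + 1),
      prod_range_succ _ (3 * M + 1), prod_range_succ _ (3 * M), ← ih, prod_range_succ _ M]
    rw [Finset.prod_filter, prod_range_succ _ (3 * M + 1 + 1 + 1), prod_range_succ _ (3 * M + 1 + 1),
      prod_range_succ _ (3 * M + 1), ← Finset.prod_filter]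
    rw [if_pos (by omega), if_pos (by omega), if_neg (by omega), ← pow_mul,
      show 3 * (M + 1) = 3 * M + 1 + 1 + 1 by ring]
    ring

lemma A_mul {R : Type*} [CommRing R] (n : ℕ) :
    (∏ j ∈ DD n, geo R j) * ∏ k ∈ range (6 * n), (1 - X ^ (k + 1)) =
      ∏ k ∈ range (2 * n), (1 - (X ^ 3) ^ (k + 1)) := by
  rw [show 6 * n = 3 * (2 * n) by ring, ← prod_split, ← mul_assoc,
    show 3 * (2 * n) + 1 = 6 * n + 1 by ring, DD, ← prod_mul_distrib, prod_eq_one, one_mul]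
  intro j hj
  exact geo_mul (DD_pos hj)

lemma prod_unit {R : Type*} [CommRing R] (n : ℕ) :
    ∃ v : R⟦X⟧, v * ∏ k ∈ range n, (1 - X ^ (k + 1)) = 1 := by
  refine ⟨∏ k ∈ range n, geo R (k + 1), ?_⟩
  rw [← prod_mul_distrib, prod_eq_one]
  intro j _
  exact geo_mul (by omega)

instance : CharP (ZMod 2)⟦X⟧ 2 := by
  have := charP_of_injective_ringHom (R := ZMod 2) (A := (ZMod 2)⟦X⟧) (f := PowerSeries.C)
    PowerSeries.C_injective 2
  exact this

lemma A_coeff (n r : ℕ) (hr : r % 4 = 2 ∨ r % 4 = 3) (hn : r < n) (Q : (ZMod 2)⟦X⟧) (hQ : Sup 4 Q) :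
    coeff r ((∏ j ∈ DD n, geo (ZMod 2) j) * Q *
      (∑ j ∈ range (2 * n), ((X : (ZMod 2)⟦X⟧) ^ 3) ^ (j * (j + 1) / 2)) ^ 2) = 0 := by
  have hg1 : ∀ k, geo (ZMod 2) (2 * k + 1) * (1 - X ^ (2 * k + 1)) = 1 :=
    fun k => geo_mul (by omega)
  have hg3 : ∀ k, geo (ZMod 2) (3 * (2 * k + 1)) * (1 - (X ^ 3) ^ (2 * k + 1)) = 1 := fun k => by
    rw [← pow_mul]; exact geo_mul (by omega)
  have s1 := shanks_dvd X _ hg1 (3 * n) (by omega)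
  have s3 := shanks_dvd (X ^ 3) _ hg3 n (by omega)
  have p1 := P_mul X _ hg1 (3 * n)
  have p3 := P_mul (X ^ 3) _ hg3 n
  have hA := A_mul (R := ZMod 2) n
  have hc := psi_coeff_s6 (2 * (3 * n)) (2 * n) 
  obtain ⟨v, hv⟩ := prod_unit (R := ZMod 2) (6 * n)
  obtain ⟨u, hu⟩ := prod_unit (R := ZMod 2) (3 * n)
  rw [show 2 * (3 * n) = 6 * n by ring] at *
  generalize (∏ k ∈ range (3 * n), (1 - X ^ (2 * k + 2)) * geo (ZMod 2) (2 * k + 1)) = P1 at *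
  generalize (∏ k ∈ range n, (1 - (X ^ 3) ^ (2 * k + 2)) * geo (ZMod 2) (3 * (2 * k + 1))) = P3 at *
  generalize (∑ i ∈ range (6 * n), (X : (ZMod 2)⟦X⟧) ^ (i * (i + 1) / 2)) = Ψ at *
  generalize (∑ j ∈ range (2 * n), ((X : (ZMod 2)⟦X⟧) ^ 3) ^ (j * (j + 1) / 2)) = B at *
  generalize (∏ k ∈ range (6 * n), (1 - (X : (ZMod 2)⟦X⟧) ^ (k + 1))) = f16 at *
  generalize (∏ k ∈ range (3 * n), (1 - (X : (ZMod 2)⟦X⟧) ^ (k + 1))) = f13 at *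
  generalize (∏ k ∈ range (2 * n), (1 - ((X : (ZMod 2)⟦X⟧) ^ 3) ^ (k + 1))) = f32 at *
  generalize (∏ k ∈ range n, (1 - ((X : (ZMod 2)⟦X⟧) ^ 3) ^ (k + 1))) = f31 at *
  generalize (∏ j ∈ DD n, geo (ZMod 2) j) = A at *
  have key : A * P3 ^ 2 = P1 * P3 * (u * f31) ^ 4 := by
    have h4 : (u * f13) ^ 4 = 1 := by rw [hu, one_pow]
    have h5 : f16 * (A * P3 ^ 2 - P1 * P3 * (u * f31) ^ 4) = 0 := by
      linear_combination P3 ^ 2 * hA + P3 * p3 - (P3 * u ^ 4 * f31 ^ 4) * p1 - (f31 ^ 4 * P3) * h4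
    linear_combination v * h5 - (A * P3 ^ 2 - P1 * P3 * (u * f31) ^ 4) * hv
  have d1 : X ^ (r + 1) ∣ Ψ - P1 := (pow_dvd_pow _ (by omega)).trans s1
  have d3 : X ^ (r + 1) ∣ B - P3 := by
    rw [← pow_mul] at s3
    exact (pow_dvd_pow _ (by omega)).trans s3
  have d : X ^ (r + 1) ∣ A * Q * B ^ 2 - (Q * (u * f31) ^ 4) * (Ψ * B) := by
    have : A * Q * B ^ 2 - (Q * (u * f31) ^ 4) * (Ψ * B) = (B - P3) * (A * Q * (B + P3)) -
        (Ψ - P1) * (Q * (u * f31) ^ 4 * B) - (B - P3) * (Q * (u * f31) ^ 4 * P1) := by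
      linear_combination Q * key
    rw [this]
    exact dvd_sub (dvd_sub (d3.mul_right _) (d1.mul_right _)) (d3.mul_right _)
  have h := X_pow_dvd_iff.1 d r (by omega)
  rw [map_sub, sub_eq_zero] at h
  rw [h]
  refine (hQ.mul (sup_pow4 _)).coeff_mul_eq_zero fun b hb hbr => ?_
  exact hc b (by omega) (by omega) (by omega)

lemma B_pow8 (n : ℕ) :
    (∑ j ∈ range n, ((X : (ZMod 2)⟦X⟧) ^ 3) ^ (j * (j + 1) / 2)) ^ 8 =
      ∑ j ∈ range n, (X : (ZMod 2)⟦X⟧) ^ (24 * (j * (j + 1) / 2)) := by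
  rw [show 8 = 2 ^ 3 by norm_num, sum_pow_char_pow]
  refine sum_congr rfl fun j _ => ?_
  rw [← pow_mul, ← pow_mul]
  congr 1
  ring

lemma L_coeff (n b : ℕ) (hb : b % 4 = 3) (hn : b ≤ 6 * n) (hn2 : b ≤ 2 * n) :
    coeff b (∑ j ∈ DD n, (X : (ZMod 2)⟦X⟧) ^ j * geo (ZMod 2) (2 * j)) =
      coeff b (X ^ 3 * (∑ j ∈ range (2 * n), ((X : (ZMod 2)⟦X⟧) ^ 3) ^ (j * (j + 1) / 2)) ^ 8) := by
  classical
  have h1 : coeff b (∑ j ∈ DD n, (X : (ZMod 2)⟦X⟧) ^ j * geo (ZMod 2) (2 * j)) =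
      ∑ _j ∈ b.divisors with ¬ 3 ∣ _j, (1 : ZMod 2) := by
    rw [map_sum]
    have e : ∀ j ∈ DD n, coeff b ((X : (ZMod 2)⟦X⟧) ^ j * geo (ZMod 2) (2 * j)) =
        if j ∣ b then 1 else 0 := by
      intro j hj
      rw [coeff_X_pow_mul']
      simp only [geo, coeff_mk]
      have : (j ≤ b ∧ 2 * j ∣ b - j) ↔ j ∣ b := by
        constructor
        · rintro ⟨h1, h2⟩
          exact (Nat.dvd_sub_iff_left h1 dvd_rfl).1 ((Dvd.intro_left 2 rfl).trans h2)
        · rintro ⟨c, rfl⟩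
          have hc : c % 2 = 1 := by
            rcases Nat.even_or_odd' c with ⟨d, rfl | rfl⟩
            · exfalso
              rw [show j * (2 * d) = 2 * (j * d) by ring] at hb
              omega
            · omega
          obtain ⟨d, rfl⟩ : ∃ d, c = 2 * d + 1 := ⟨c / 2, by omega⟩
          refine ⟨by nlinarith, d, ?_⟩
          rw [show j * (2 * d + 1) = 2 * j * d + j by ring, Nat.add_sub_cancel]
      by_cases h : j ∣ b
      · rw [if_pos (this.2 h).1, if_pos (this.2 h).2, if_pos h]
      · rw [if_neg h]
        split_ifs <;> tauto
    rw [sum_congr rfl e, ← sum_filter]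
    congr 1
    ext j
    simp only [DD, mem_filter, mem_range, Nat.mem_divisors]
    constructor
    · rintro ⟨⟨_, h⟩, h'⟩
      exact ⟨⟨h', by omega⟩, h⟩
    · rintro ⟨⟨h, _⟩, h'⟩
      have := Nat.le_of_dvd (by omega) h
      exact ⟨⟨by omega, h'⟩, h⟩
  rw [h1, div_par3 b hb, B_pow8, mul_sum, map_sum]
  have e : ∀ j ∈ range (2 * n), coeff b ((X : (ZMod 2)⟦X⟧) ^ 3 * X ^ (24 * (j * (j + 1) / 2))) =
      if b = 3 * (2 * j + 1) ^ 2 then 1 else 0 := by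
    intro j _
    rw [← pow_add, coeff_X_pow]
    have := even_tri j
    have : 3 + 24 * (j * (j + 1) / 2) = 3 * (2 * j + 1) ^ 2 := by nlinarith
    rw [this]
  rw [sum_congr rfl e]
  split_ifs with h
  · obtain ⟨i, hi⟩ := h
    rw [sum_eq_single i, if_pos hi]
    · intro j _ hj
      rw [if_neg]
      intro h
      apply hj
      have h3 : (2 * j + 1) ^ 2 = (2 * i + 1) ^ 2 := by omega
      have := Nat.pow_left_injective (n := 2) (by norm_num) h3
      omega
    · intro h
      exfalso
      apply h
      rw [mem_range]
      nlinarith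
  · push Not at h
    symm
    exact sum_eq_zero fun j _ => if_neg (h j)

lemma main2 (n r : ℕ) (hr : r % 4 = 2 ∨ r % 4 = 3) (hn : 4 * r + 3 ≤ 2 * n) (Q : (ZMod 2)⟦X⟧)
    (hQ : Sup 4 Q) :
    coeff (4 * r + 3) (((∏ j ∈ DD n, geo (ZMod 2) j) ^ 4 * Q ^ 4) *
      ∑ j ∈ DD n, (X : (ZMod 2)⟦X⟧) ^ j * geo (ZMod 2) (2 * j)) = 0 := by
  have h1 : coeff (4 * r + 3) (((∏ j ∈ DD n, geo (ZMod 2) j) ^ 4 * Q ^ 4) *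
      ((∑ j ∈ DD n, (X : (ZMod 2)⟦X⟧) ^ j * geo (ZMod 2) (2 * j)) -
      (X ^ 3 * (∑ j ∈ range (2 * n), ((X : (ZMod 2)⟦X⟧) ^ 3) ^ (j * (j + 1) / 2)) ^ 8))) = 0 := by
    refine ((sup_pow4 _).mul (sup_pow4 _)).coeff_mul_eq_zero fun b hb hbr => ?_
    rw [map_sub, L_coeff n b (by omega) (by omega) (by omega), sub_self]
  rw [mul_sub, map_sub, sub_eq_zero] at h1
  rw [h1]
  have h2 := A_coeff n r hr (by omega) Q hQ
  rw [← coeff_pow4] at h2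
  rw [← coeff_X_pow_mul _ 3 (4 * r)] at h2
  generalize (∑ j ∈ range (2 * n), ((X : (ZMod 2)⟦X⟧) ^ 3) ^ (j * (j + 1) / 2)) = B at *
  generalize (∏ j ∈ DD n, geo (ZMod 2) j) = A at *
  have e : A ^ 4 * Q ^ 4 * (X ^ 3 * B ^ 8) = X ^ 3 * (A * Q * B ^ 2) ^ 4 := by ring
  rw [e]
  exact h2

lemma geo_sq (j : ℕ) (hj : 0 < j) : geo (ZMod 2) (2 * j) = geo (ZMod 2) j ^ 2 := by
  have h1 := geo_mul (R := ZMod 2) (j := j) hj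
  have h2 := geo_mul (R := ZMod 2) (j := 2 * j) (by omega)
  have h3 : (1 - X ^ j : (ZMod 2)⟦X⟧) ^ 2 = 1 - X ^ (2 * j) := by
    rw [sub_pow_char, one_pow, ← pow_mul, mul_comm]
  rw [← h3] at h2
  have h4 : (geo (ZMod 2) j) ^ 2 * (1 - X ^ j) ^ 2 = 1 := by rw [← mul_pow, h1, one_pow]
  linear_combination (geo (ZMod 2) j) ^ 2 * h2 - geo (ZMod 2) (2 * j) * h4

lemma geo4 (j : ℕ) (hj : 0 < j) :
    geo ℤ j ^ 4 = geo ℤ (2 * j) ^ 2 * (1 + 4 * (X ^ j * geo ℤ j ^ 2)) := by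
  have h1 := geo_mul (R := ℤ) (j := j) hj
  have h2 := geo_mul (R := ℤ) (j := 2 * j) (by omega)
  rw [mul_comm 2 j, pow_mul] at h2
  rw [mul_comm 2 j]
  generalize (X ^ j : ℤ⟦X⟧) = x at *
  generalize geo ℤ (j * 2) = h at *
  generalize geo ℤ j = g at *
  have e : h * (1 + x) = g := by linear_combination g * h2 - h * (1 + x) * h1
  have e2 : 1 + 4 * (x * g ^ 2) = (1 + x) ^ 2 * g ^ 2 := by
    linear_combination -(g * (1 - x) + 1) * h1
  rw [e2]
  linear_combination -(g ^ 2) * (h * (1 + x) + g) * e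

lemma prod_one_add (s : Finset ℕ) (f : ℕ → ℤ⟦X⟧) :
    ∃ E, ∏ j ∈ s, (1 + 4 * f j) = 1 + 4 * ∑ j ∈ s, f j + 8 * E := by
  induction s using Finset.induction_on with
  | empty => exact ⟨0, by simp⟩
  | insert a s ha ih =>
    obtain ⟨E, hE⟩ := ih
    rw [prod_insert ha, sum_insert ha, hE]
    exact ⟨2 * f a * ∑ j ∈ s, f j + E + 4 * f a * E, by ring⟩

lemma gen (m n N : ℕ) (hN : N ≤ 6 * n) :
    ((coloredRegular 4 3 m N : ℕ) : ℤ) =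
      coeff N (∏ j ∈ (DD n).filter (fun j => ¬ m ∣ j), geo ℤ j ^ 4) := by
  have h := card_gen (((DD n).filter (fun j => ¬ m ∣ j)) ×ˢ range 4) Prod.fst (by
    intro a ha
    exact DD_pos (mem_filter.1 (mem_product.1 ha).1).1) N
  rw [prod_product] at h
  simp only [prod_const, card_range] at h
  rw [← h, coloredRegular]
  congr 1
  apply Nat.card_congr
  apply Equiv.subtypeEquivRight
  intro M
  refine and_congr_left fun hs => forall₂_congr fun x hx => ?_
  have hx1 : x.1 ≤ N := by
    rw [← hs]
    exact Multiset.single_le_sum (fun _ _ => Nat.zero_le _) _ (Multiset.mem_map_of_mem _ hx)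
  simp only [mem_product, mem_filter, DD, mem_range]
  constructor
  · rintro ⟨a, b, c⟩
    exact ⟨⟨⟨by omega, a⟩, b⟩, c⟩
  · rintro ⟨⟨⟨_, a⟩, b⟩, c⟩
    exact ⟨a, b, c⟩

lemma final (t r : ℕ) (hr : r % 4 = 2 ∨ r % 4 = 3) :
    coloredRegular 4 3 (4 * t) (4 * r + 3) ≡ 0 [MOD 8] := by
  set n := 4 * r + 3 with hn
  rw [Nat.modEq_zero_iff_dvd]
  zify
  rw [gen (4 * t) n n (by omega)]
  set H : ℤ⟦X⟧ := ∏ j ∈ (DD n).filter (fun j => 4 * t ∣ j), (1 - X ^ j) with hH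
  set K : ℤ⟦X⟧ := ∏ j ∈ DD n, geo ℤ (2 * j) with hK
  have hG : ∏ j ∈ (DD n).filter (fun j => ¬ 4 * t ∣ j), geo ℤ j ^ 4 =
      (∏ j ∈ DD n, geo ℤ j ^ 4) * H ^ 4 := by
    rw [← prod_filter_mul_prod_filter_not (DD n) (fun j => 4 * t ∣ j) (fun j => geo ℤ j ^ 4)]
    have : (∏ j ∈ (DD n).filter (fun j => 4 * t ∣ j), geo ℤ j ^ 4) * H ^ 4 = 1 := by
      rw [hH, ← prod_pow, ← prod_mul_distrib, prod_eq_one]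
      intro j hj
      rw [← mul_pow, geo_mul (DD_pos (mem_filter.1 hj).1), one_pow]
    linear_combination -(∏ j ∈ (DD n).filter (fun j => ¬ 4 * t ∣ j), geo ℤ j ^ 4) * this
  obtain ⟨E, hE⟩ := prod_one_add (DD n) (fun j => X ^ j * geo ℤ j ^ 2)
  rw [hG, prod_congr rfl (fun j hj => geo4 j (DD_pos hj)), prod_mul_distrib, hE, prod_pow, ← hK]
  have hHs : Sup 4 H := Sup.prod _ fun j hj =>
    Sup.sub ((Dvd.intro _ rfl).trans (mem_filter.1 hj).2)
  have hH2 : Sup 2 H := fun k hk => hHs k (by omega)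
  have hKs : Sup 2 K := Sup.prod _ fun j _ => Sup.geo (Dvd.intro _ rfl)
  have z1 : coeff n (K ^ 2 * H ^ 4) = 0 := ((hKs.pow 2).mul (hH2.pow 4)) n (by omega)
  have z2 : (2 : ℤ) ∣ coeff n (K ^ 2 * H ^ 4 * ∑ j ∈ DD n, X ^ j * geo ℤ j ^ 2) := by
    rw [← Nat.cast_ofNat, ← ZMod.intCast_zmod_eq_zero_iff_dvd]
    have hQ : Sup 4 (PowerSeries.map (Int.castRingHom (ZMod 2)) H) := by
      intro k hk
      rw [coeff_map, hHs k hk, map_zero]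
    have m2 := main2 n r hr (by omega) _ hQ
    rw [← hn] at m2
    rw [← m2, ← eq_intCast (Int.castRingHom (ZMod 2)), ← coeff_map]
    have k1 : PowerSeries.map (Int.castRingHom (ZMod 2)) K ^ 2 =
        (∏ j ∈ DD n, geo (ZMod 2) j) ^ 4 := by
      rw [hK, map_prod, ← prod_pow, ← prod_pow]
      refine prod_congr rfl fun j hj => ?_
      rw [map_geo, geo_sq j (DD_pos hj), ← pow_mul]
    have k2 : PowerSeries.map (Int.castRingHom (ZMod 2)) (∑ j ∈ DD n, X ^ j * geo ℤ j ^ 2) =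
        ∑ j ∈ DD n, (X : (ZMod 2)⟦X⟧) ^ j * geo (ZMod 2) (2 * j) := by
      rw [map_sum]
      refine sum_congr rfl fun j hj => ?_
      rw [map_mul, map_pow, map_pow, map_geo, map_X, geo_sq j (DD_pos hj)]
    rw [RingHom.map_mul, RingHom.map_mul, RingHom.map_pow, RingHom.map_pow, k1, k2]
  obtain ⟨c, hc⟩ := z2
  have e : K ^ 2 * (1 + 4 * ∑ j ∈ DD n, X ^ j * geo ℤ j ^ 2 + 8 * E) * H ^ 4 =
      K ^ 2 * H ^ 4 + C (4 : ℤ) * (K ^ 2 * H ^ 4 * ∑ j ∈ DD n, X ^ j * geo ℤ j ^ 2) +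
      C (8 : ℤ) * (K ^ 2 * H ^ 4 * E) := by
    generalize (∑ j ∈ DD n, X ^ j * geo ℤ j ^ 2) = S
    rw [show C (4 : ℤ) = (4 : ℤ⟦X⟧) from map_ofNat _ _, show C (8 : ℤ) = (8 : ℤ⟦X⟧) from map_ofNat _ _]
    ring
  rw [e, map_add, map_add, coeff_C_mul, coeff_C_mul, z1, hc]
  exact ⟨c + coeff n (K ^ 2 * H ^ 4 * E), by push_cast; ring⟩

theorem stmt_6 (t : ℕ) (ht : 0 < t) (h3 : ¬ 3 ∣ t) (n : ℕ) :
    coloredRegular 4 3 (4 * t) (16 * n + 15) ≡ 0 [MOD 8] ∧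
    coloredRegular 4 3 (4 * t) (16 * n + 11) ≡ 0 [MOD 8] := by
  constructor
  · have := final t (4 * n + 3) (by omega)
    rwa [show 4 * (4 * n + 3) + 3 = 16 * n + 15 by ring] at this
  · have := final t (4 * n + 2) (by omega)
    rwa [show 4 * (4 * n + 2) + 3 = 16 * n + 11 by ring] at this
end
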